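/- arXiv:1503.00918 — 2 statements merged into one kernel-verified Lean document; each statement's English description precedes it below -/
import Mathlib

section
/- Let α, β ∈ K, n ≥ 2, m > n, and let P = {a_1, …, a_m} be m points ordered anticlockwise on a circle; equip the total fraction ring Q_n(P) of the rank n swapping ring with the (β−α, α+β)-swapping bracket. For indices 1 ≤ i, i' ≤ n < j, j' ≤ m, define s_=(a_i, a_j, a_{i'}, a_{j'}) to be 1 if a_i ≺ a_{i'} ≺ a_{j'} ≺ a_j; −1 if a_{i'} ≺ a_i ≺ a_j ≺ a_{j'}; 1/2 if a_i = a_{i'} ≺ a_{j'} ≺ a_j or a_i ≺ a_{i'} ≺ a_{j'} = a_j; −1/2 if a_{i'} = a_i ≺ a_j ≺ a_{j'} or a_{i'} ≺ a_i ≺ a_j = a_{j'}; and 0 otherwise. On the polynomial ring K[m_{ij} : 1 ≤ i ≤ n < j ≤ m] define the bracket {m_{ij}, m_{i'j'}}_{B_{α,β}} = (α−β)·s_=(a_i, a_j, a_{i'}, a_{j'})·m_{ij'}·m_{i'j} + (α+β)·J(a_i a_j, a_{i'} a_{j'})·m_{ij}·m_{i'j'}, where J is the linking number. Then the algebra homomorphism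 θ sending m_{ij} to the determinant quotient E(a_1, …, a_{i−1}, a_{i+1}, …, a_n | a_j, a_i) ∈ Q_n(P) is injective and is Poisson with respect to {·,·}_{B_{α,β}} and the (β−α, α+β)-swapping bracket. -/
noncomputable section

open scoped Classical
open MvPolynomial

set_option maxHeartbeats 1000000
set_option synthInstance.maxHeartbeats 400000

instance fact01 : Fact ((0:ℝ) < 1) := ⟨one_pos⟩

/-- The circle, modelled as `ℝ/ℤ`. -/
abbrev Circle1 : Type := AddCircle (1:ℝ)

/-- The coordinate in `[0,1)` of the point `x` of the circle obtained after removing the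
point `o` and identifying the complement of `o` with an interval. -/
def coordAt (o x : Circle1) : ℝ := ((AddCircle.equivIco 1 0) (x - o) : ℝ)

/-- The sign `△` of a real number, as a rational number in `{-1, 0, 1}`. -/
def sgnQ (a : ℝ) : ℚ := if a < 0 then -1 else if a = 0 then 0 else 1

/-- The linking number `J(rx, sy)` of the chords `rx` and `sy`, computed using the
cut point `o`. -/
def linkingAt (o r x s y : Circle1) : ℚ :=
  (1/2) * (sgnQ (coordAt o r - coordAt o x) * sgnQ (coordAt o r - coordAt o y)
        * sgnQ (coordAt o y - coordAt o x)
      - sgnQ (coordAt o r - coordAt o x) * sgnQ (coordAt o r - coordAt o s)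
        * sgnQ (coordAt o s - coordAt o x))

lemma circle1_infinite : Infinite Circle1 := by
  have h : (Set.Ico (0:ℝ) (0+1)).Infinite := Set.Ico_infinite (by norm_num)
  haveI := h.to_subtype
  exact Infinite.of_injective (fun q : Set.Ico (0:ℝ) (0+1) => (AddCircle.equivIco 1 0).symm q)
    ((AddCircle.equivIco 1 0).symm.injective)

lemma exists_cut (r x s y : Circle1) :
    ∃ o : Circle1, o ≠ r ∧ o ≠ x ∧ o ≠ s ∧ o ≠ y := by
  haveI : Infinite Circle1 := circle1_infinite
  have hfin : ({r, x, s, y} : Set Circle1).Finite :=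
    (((Set.finite_singleton y).insert s).insert x).insert r
  obtain ⟨o, ho⟩ := hfin.infinite_compl.nonempty
  simp only [Set.mem_compl_iff, Set.mem_insert_iff, Set.mem_singleton_iff, not_or] at ho
  exact ⟨o, ho.1, ho.2.1, ho.2.2.1, ho.2.2.2⟩

/-- The linking number `J(rx, sy)` of the chords `rx` and `sy` (computed with respect to
some cut point distinct from the four points; by the independence of the choice this is
the linking number). -/
def linkQ (r x s y : Circle1) : ℚ := linkingAt (exists_cut r x s y).choose r x s y

/-- The set of points of the circle `l`, listed in anticlockwise (cyclic) order:
there is a cut point `o` avoiding them such that the induced coordinates are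
strictly increasing along the list. -/
def AnticlockwiseList (l : List Circle1) : Prop :=
  ∃ o : Circle1, (∀ p ∈ l, p ≠ o) ∧ (l.map (coordAt o)).Chain' (· < ·)

/-- Index type for the generators `xy` of the swapping ring of `P`
(one generator for each ordered pair of distinct points; the generators `xx`
are identified with `0`). -/
abbrev SwapIdx (P : Set Circle1) : Type := {q : (↥P) × (↥P) // q.1 ≠ q.2}

/-- The swapping ring `Z(P)`: the polynomial ring over `K` on the generators `xy`,
`x ≠ y ∈ P` (this realizes the commutative ring generated by all ordered pairs `xy`
subject to the relations `xx = 0`). -/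
abbrev SwapRing (K : Type) [Field K] (P : Set Circle1) : Type := MvPolynomial (SwapIdx P) K

/-- The generator `xy` of the swapping ring (equal to `0` when `x = y`). -/
def gen (K : Type) [Field K] (P : Set Circle1) (x y : ↥P) : SwapRing K P :=
  if h : x ≠ y then MvPolynomial.X (⟨(x, y), h⟩ : SwapIdx P) else 0

/-- The value of the `(c1,c2)`-swapping bracket on two generators `rx` and `sy`:
`J(rx,sy) • (c1 • ry·sx + c2 • rx·sy)`. -/
def genBr (K : Type) [Field K] (P : Set Circle1) (c1 c2 : K) (g g' : SwapIdx P) :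
    SwapRing K P :=
  ((linkQ g.1.1.1 g.1.2.1 g'.1.1.1 g'.1.2.1 : ℚ) : K) •
    (c1 • (gen K P g.1.1 g'.1.2 * gen K P g'.1.1 g.1.2)
      + c2 • (gen K P g.1.1 g.1.2 * gen K P g'.1.1 g'.1.2))

/-- The `(c1,c2)`-swapping bracket on `Z(P)`: the biderivation extending
`{rx, sy} = J(rx,sy)·(c1·ry·sx + c2·rx·sy)` by the Leibniz rule in each argument.
The swapping bracket is the case `c1 = 1, c2 = 0`. -/
def swapBr (K : Type) [Field K] (P : Set Circle1) (c1 c2 : K) (a b : SwapRing K P) :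
    SwapRing K P :=
  (MvPolynomial.mkDerivation K
    (fun g : SwapIdx P => (MvPolynomial.mkDerivation K (genBr K P c1 c2 g)) b)) a

/-- `Δ((x_1,…,x_m),(y_1,…,y_m)) = det (x_i y_j)` in the swapping ring. -/
def Dmat (K : Type) [Field K] (P : Set Circle1) (m : ℕ) (xs ys : Fin m → ↥P) :
    SwapRing K P :=
  Matrix.det (Matrix.of fun i j => gen K P (xs i) (ys j))

/-- The ideal `R_n(P)` of `Z(P)` generated by all `(n+1)×(n+1)` determinants
`Δ((x_1,…,x_{n+1}),(y_1,…,y_{n+1}))`. -/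
def Rideal (K : Type) [Field K] (P : Set Circle1) (n : ℕ) : Ideal (SwapRing K P) :=
  Ideal.span {D : SwapRing K P | ∃ xs ys : Fin (n+1) → ↥P, D = Dmat K P (n+1) xs ys}

/-- The rank `n` swapping ring `Z_n(P) = Z(P)/R_n(P)`. -/
abbrev ZnRing (K : Type) [Field K] (P : Set Circle1) (n : ℕ) : Type :=
  SwapRing K P ⧸ Rideal K P n

/-- The quotient map `Z(P) → Z_n(P)`. -/
def toZn (K : Type) [Field K] (P : Set Circle1) (n : ℕ) :
    SwapRing K P →+* ZnRing K P n := Ideal.Quotient.mk (Rideal K P n)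

/-- The total fraction ring `Q_n(P)` of the rank `n` swapping ring. -/
abbrev QnRing (K : Type) [Field K] (P : Set Circle1) (n : ℕ) : Type :=
  Localization (nonZeroDivisors (ZnRing K P n))

/-- The canonical map `Z(P) → Q_n(P)`. -/
def toQn (K : Type) [Field K] (P : Set Circle1) (n : ℕ) :
    SwapRing K P →+* QnRing K P n :=
  (algebraMap (ZnRing K P n) (QnRing K P n)).comp (toZn K P n)

/-- `Bq` is the extension to the total fraction ring `Q_n(P)` of the `(c1,c2)`-swapping
bracket of the rank `n` swapping algebra: it agrees with the swapping bracket on the image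
of `Z(P)` and satisfies the Leibniz rule in both arguments (these properties determine it
uniquely). -/
def IsQnBracket (K : Type) [Field K] (P : Set Circle1) (n : ℕ) (c1 c2 : K)
    (Bq : QnRing K P n → QnRing K P n → QnRing K P n) : Prop :=
  (∀ a b : SwapRing K P,
      Bq (toQn K P n a) (toQn K P n b) = toQn K P n (swapBr K P c1 c2 a b)) ∧
  (∀ a b c : QnRing K P n, Bq (a * b) c = a * Bq b c + b * Bq a c) ∧
  (∀ a b c : QnRing K P n, Bq a (b * c) = b * Bq a c + c * Bq a b)

/-- The `n`-tuple `(x_1, …, x_a, y_1, …, y_b, z_1, …, z_{n-a-b})` built from three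
families of points (families are indexed from `0`, i.e. `x 0 = x_1`). -/
def rows3 {α : Type*} {n : ℕ} (x y z : ℕ → α) (a b : ℕ) : Fin n → α :=
  fun i => if (i : ℕ) < a then x (i : ℕ)
    else if (i : ℕ) < a + b then y ((i : ℕ) - a)
    else z ((i : ℕ) - (a + b))

/-- The `n`-tuple `(x_1, …, x_a, y_1, …, y_b, z_1, …, z_{n-1-a-b}, w)` built from three
families of points and a final point `w`. -/
def rows3s {α : Type*} {n : ℕ} (x y z : ℕ → α) (a b : ℕ) (w : α) : Fin n → α :=
  fun i => if (i : ℕ) < a then x (i : ℕ)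
    else if (i : ℕ) < a + b then y ((i : ℕ) - a)
    else if (i : ℕ) < n - 1 then z ((i : ℕ) - (a + b))
    else w

/-- The `n`-tuple `(x_1, …, x_{n-1}, t)`. -/
def snocTup {α : Type*} {n : ℕ} (x : ℕ → α) (t : α) : Fin n → α :=
  fun i => if (i : ℕ) < n - 1 then x (i : ℕ) else t

/-- The list `f_a, f_{a-1}, …, f_1` (descending enumeration). -/
def descPts (f : ℕ → Circle1) (a : ℕ) : List Circle1 := ((List.range a).map f).reverse

/-- The list `f_1, f_2, …, f_a` (ascending enumeration). -/
def ascPts (f : ℕ → Circle1) (a : ℕ) : List Circle1 := (List.range a).map f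

/-- The `(n×n)`-determinant quotient `Δ(numR, v)/Δ(denR, v)` as an element of the total
fraction ring `Q_n(P)`. -/
def EQuot (K : Type) [Field K] (P : Set Circle1) (n : ℕ)
    (numR denR v : Fin n → ↥P)
    (h : toZn K P n (Dmat K P n denR v) ∈ nonZeroDivisors (ZnRing K P n)) :
    QnRing K P n :=
  Localization.mk (toZn K P n (Dmat K P n numR v)) ⟨toZn K P n (Dmat K P n denR v), h⟩


/-- `s_=(a_i, a_j, a_{i'}, a_{j'})` expressed through the indices, for points
`a_1 ≺ a_2 ≺ … ≺ a_m` ordered anticlockwise with `i, i' ≤ n < j, j'`: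
it is `1` if `a_i ≺ a_{i'} ≺ a_{j'} ≺ a_j`, `-1` if `a_{i'} ≺ a_i ≺ a_j ≺ a_{j'}`,
`1/2` if `a_i = a_{i'} ≺ a_{j'} ≺ a_j` or `a_i ≺ a_{i'} ≺ a_{j'} = a_j`,
`-1/2` if `a_{i'} = a_i ≺ a_j ≺ a_{j'}` or `a_{i'} ≺ a_i ≺ a_j = a_{j'}`, and `0`
otherwise. -/
def sEq (i j i' j' : ℕ) : ℚ :=
  if i < i' ∧ j' < j then 1
  else if i' < i ∧ j < j' then -1
  else if (i = i' ∧ j' < j) ∨ (i < i' ∧ j' = j) then 1/2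
  else if (i = i' ∧ j < j') ∨ (i' < i ∧ j = j') then -1/2
  else 0

/-- Index type for the coordinates `m_{ij}`, `1 ≤ i ≤ n < j ≤ m`, on the cell of the
Grassmannian `G_{n,m}`. -/
abbrev GIdx (m n : ℕ) : Type := {ij : ℕ × ℕ // 1 ≤ ij.1 ∧ ij.1 ≤ n ∧ n < ij.2 ∧ ij.2 ≤ m}

/-- The value of the bracket `{·,·}_{B_{α,β}}` on two coordinate functions:
`{m_{ij}, m_{i'j'}} = (α-β)·s_=(a_i,a_j,a_{i'},a_{j'})·m_{ij'}·m_{i'j}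
  + (α+β)·J(a_i a_j, a_{i'} a_{j'})·m_{ij}·m_{i'j'}`. -/
def genG (K : Type) [Field K] (m n : ℕ) (al be : K) (a : ℕ → Circle1)
    (g g' : GIdx m n) : MvPolynomial (GIdx m n) K :=
  ((al - be) * ((sEq g.1.1 g.1.2 g'.1.1 g'.1.2 : ℚ) : K)) •
    (MvPolynomial.X (⟨(g.1.1, g'.1.2), g.2.1, g.2.2.1, g'.2.2.2.1, g'.2.2.2.2⟩ : GIdx m n)
      * MvPolynomial.X (⟨(g'.1.1, g.1.2), g'.2.1, g'.2.2.1, g.2.2.2.1, g.2.2.2.2⟩ : GIdx m n))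
  + ((al + be) * ((linkQ (a g.1.1) (a g.1.2) (a g'.1.1) (a g'.1.2) : ℚ) : K)) •
      (MvPolynomial.X g * MvPolynomial.X g')

/-- The bracket `{·,·}_{B_{α,β}}` on the polynomial ring `K[m_{ij}]`, extended from the
coordinate functions by the Leibniz rule in each argument. -/
def brG (K : Type) [Field K] (m n : ℕ) (al be : K) (a : ℕ → Circle1)
    (f h : MvPolynomial (GIdx m n) K) : MvPolynomial (GIdx m n) K :=
  (MvPolynomial.mkDerivation K
    (fun g : GIdx m n => (MvPolynomial.mkDerivation K (genG K m n al be a g)) h)) f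

/-- The point `a_k` as an element of `P = {a_1, …, a_m}`. -/
def mkP (m : ℕ) (a : ℕ → Circle1) (k : ℕ) (h1 : 1 ≤ k) (h2 : k ≤ m) :
    ↥(a '' Set.Icc 1 m) := ⟨a k, ⟨k, Set.mem_Icc.mpr ⟨h1, h2⟩, rfl⟩⟩

/-- The `n`-tuple `(a_1, …, a_{i-1}, a_{i+1}, …, a_n, a_last)` (the hat tuple `â_i`
followed by a final point `a_last`). -/
def hatRows (m n : ℕ) (a : ℕ → Circle1) (i last : ℕ) (hnm : n < m) (hi : i ≤ n)
    (h1 : 1 ≤ last) (h2 : last ≤ m) : Fin n → ↥(a '' Set.Icc 1 m) :=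
  fun k => if hk : (k : ℕ) < n - 1 then
      (if (k : ℕ) + 1 < i then mkP m a ((k : ℕ) + 1) (by omega) (by omega)
        else mkP m a ((k : ℕ) + 2) (by omega) (by omega))
    else mkP m a last h1 h2

/-- The right-side `n`-tuple `(a_1, …, a_n)` used to represent the determinant
quotients. -/
def vTup (m n : ℕ) (a : ℕ → Circle1) (hnm : n ≤ m) : Fin n → ↥(a '' Set.Icc 1 m) :=
  fun k => mkP m a ((k : ℕ) + 1) (by omega) (by have := k.isLt; omega)

section
open scoped Classical
open MvPolynomial

namespace Sft

abbrev Tau (ι : Type) (n : ℕ) : Type := ι × (Fin n ⊕ Fin n)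

def pr {ι : Type} (n : ℕ) (R : Type) [CommSemiring R] (p q : ι) : MvPolynomial (Tau ι n) R :=
  ∑ k : Fin n, X (p, Sum.inl k) * X (q, Sum.inr k)

def Phi (ι : Type) (n : ℕ) (R : Type) [CommSemiring R] :
    MvPolynomial (ι × ι) R →ₐ[R] MvPolynomial (Tau ι n) R :=
  aeval (fun g => pr n R g.1 g.2)

lemma fs_ind {α : Type} (P : (α →₀ ℕ) → Prop) (h0 : P 0) (hs : ∀ a, P (Finsupp.single a 1))
    (hadd : ∀ f g, P f → P g → P (f + g)) : ∀ f, P f := by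
  intro f
  induction f using Finsupp.induction_linear with
  | zero => exact h0
  | add f g hf hg => exact hadd f g hf hg
  | single a k =>
    induction k with
    | zero => simpa using h0
    | succ k ih => rw [Finsupp.single_add]; exact hadd _ _ ih (hs a)

def tot {ι : Type} {n : ℕ} (N : ι × ι × Fin n →₀ ℕ) : ι × ι →₀ ℕ :=
  N.mapDomain (fun x => (x.1, x.2.1))

def marg {ι : Type} {n : ℕ} (N : ι × ι × Fin n →₀ ℕ) : Tau ι n →₀ ℕ :=
  N.mapDomain (fun x => (x.1, Sum.inl x.2.2)) + N.mapDomain (fun x => (x.2.1, Sum.inr x.2.2))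

lemma tot_add {ι : Type} {n : ℕ} (N M : ι × ι × Fin n →₀ ℕ) : tot (N + M) = tot N + tot M :=
  Finsupp.mapDomain_add

lemma marg_add {ι : Type} {n : ℕ} (N M : ι × ι × Fin n →₀ ℕ) :
    marg (N + M) = marg N + marg M := by
  simp only [marg, Finsupp.mapDomain_add]; abel

lemma supp_color {ι : Type} {n : ℕ} {R : Type} [CommSemiring R] (ν : ι × ι →₀ ℕ) :
    ∀ e, coeff e (Phi ι n R (monomial ν 1)) ≠ 0 →
      ∃ N : ι × ι × Fin n →₀ ℕ, tot N = ν ∧ marg N = e := by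
  induction ν using fs_ind with
  | h0 =>
    intro e he
    refine ⟨0, by simp [tot], ?_⟩
    have : (monomial (0 : ι × ι →₀ ℕ) (1:R)) = 1 := rfl
    rw [this, map_one, coeff_one] at he
    by_cases h : 0 = e
    · subst h; simp [marg]
    · simp [h] at he
  | hs a =>
    intro e he
    have : (monomial (Finsupp.single a 1) (1:R)) = X a := rfl
    rw [this, Phi, aeval_X, pr, coeff_sum] at he
    obtain ⟨k, -, hk⟩ := Finset.exists_ne_zero_of_sum_ne_zero he
    refine ⟨Finsupp.single (a.1, a.2, k) 1, by simp [tot], ?_⟩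
    have h2 : (X (a.1, Sum.inl k) * X (a.2, Sum.inr k) : MvPolynomial (Tau ι n) R)
      = monomial (Finsupp.single (a.1, Sum.inl k) 1 + Finsupp.single (a.2, Sum.inr k) 1) 1 := by
      simp [X, monomial_mul]
    rw [h2, coeff_monomial] at hk
    simp only [marg, Finsupp.mapDomain_single]
    by_contra hne
    simp [hne] at hk
  | hadd f g hf hg =>
    intro e he
    have : (monomial (f + g) (1:R)) = monomial f 1 * monomial g 1 := by simp [monomial_mul]
    rw [this, map_mul, coeff_mul] at he
    obtain ⟨⟨e1, e2⟩, hmem, hne⟩ := Finset.exists_ne_zero_of_sum_ne_zero he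
    obtain ⟨N1, h1, h1'⟩ := hf e1 (left_ne_zero_of_mul hne)
    obtain ⟨N2, h2, h2'⟩ := hg e2 (right_ne_zero_of_mul hne)
    refine ⟨N1 + N2, by rw [tot_add, h1, h2], ?_⟩
    rw [marg_add, h1', h2']
    simpa using hmem

lemma coeff_add_le {σ : Type} (p q : MvPolynomial σ ℕ) (e f : σ →₀ ℕ) :
    coeff e p * coeff f q ≤ coeff (e + f) (p * q) := by
  rw [coeff_mul]
  exact Finset.single_le_sum (f := fun x : (σ →₀ ℕ) × (σ →₀ ℕ) => coeff x.1 p * coeff x.2 q)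
    (fun _ _ => Nat.zero_le _) (a := (e, f)) (by simp)

lemma pos_color {ι : Type} {n : ℕ} (N : ι × ι × Fin n →₀ ℕ) :
    0 < coeff (marg N) (Phi ι n ℕ (monomial (tot N) 1)) := by
  induction N using fs_ind with
  | h0 =>
    have : (monomial (0 : ι × ι →₀ ℕ) (1:ℕ)) = 1 := rfl
    simp [tot, marg, this]
  | hs a =>
    have h1 : tot (Finsupp.single a 1) = Finsupp.single (a.1, a.2.1) 1 := by simp [tot]
    have : (monomial (Finsupp.single (a.1, a.2.1) 1) (1:ℕ)) = X (a.1, a.2.1) := rfl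
    rw [h1, this, Phi, aeval_X, pr, coeff_sum]
    refine Finset.sum_pos' (fun _ _ => Nat.zero_le _) ⟨a.2.2, Finset.mem_univ _, ?_⟩
    have h2 : (X (a.1, Sum.inl a.2.2) * X (a.2.1, Sum.inr a.2.2) : MvPolynomial (Tau ι n) ℕ)
      = monomial (Finsupp.single (a.1, Sum.inl a.2.2) 1 +
          Finsupp.single (a.2.1, Sum.inr a.2.2) 1) 1 := by
      simp [X, monomial_mul]
    rw [h2, coeff_monomial]
    simp [marg]
  | hadd f g hf hg =>
    have : (monomial (tot (f + g)) (1:ℕ)) = monomial (tot f) 1 * monomial (tot g) 1 := by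
      simp [monomial_mul, tot_add]
    rw [this, map_mul, marg_add]
    exact lt_of_lt_of_le (Nat.mul_pos hf hg) (coeff_add_le _ _ _ _)

lemma Phi_cast {ι : Type} {n : ℕ} {R : Type} [CommSemiring R] (f : MvPolynomial (ι × ι) ℕ) :
    Phi ι n R (map (Nat.castRingHom R) f) = map (Nat.castRingHom R) (Phi ι n ℕ f) := by
  induction f using MvPolynomial.induction_on with
  | C a => simp [Phi]
  | add p q hp hq => simp only [map_add, hp, hq]
  | mul_X p i hp => simp only [map_mul, hp, map_X]; simp [Phi, pr]

lemma pos_color' {ι : Type} {n : ℕ} {R : Type} [CommSemiring R] [CharZero R]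
    (N : ι × ι × Fin n →₀ ℕ) :
    coeff (marg N) (Phi ι n R (monomial (tot N) 1)) ≠ 0 := by
  have h : (monomial (tot N) (1:R)) = map (Nat.castRingHom R) (monomial (tot N) 1) := by
    simp [map_monomial]
  rw [h, Phi_cast, coeff_map]
  have := pos_color N
  simp only [eq_natCast, ne_eq, Nat.cast_eq_zero]
  omega

section order
variable {ι : Type} [Fintype ι] [LinearOrder ι]

lemma quad_id (u : ι → ι → ℕ) (s t : ι) :
    (∑ p, ∑ q, if s ≤ p ∧ t ≤ q then u p q else 0) + ∑ p, ∑ q, u p q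
     = (∑ p, if s ≤ p then ∑ q, u p q else 0) + (∑ q, if t ≤ q then ∑ p, u p q else 0)
      + ∑ p, ∑ q, if p < s ∧ q < t then u p q else 0 := by
  have h1 : (∑ p, if s ≤ p then ∑ q, u p q else 0) = ∑ p, ∑ q, if s ≤ p then u p q else 0 := by
    refine Finset.sum_congr rfl fun p _ => ?_
    split_ifs <;> simp
  have h2 : (∑ q, if t ≤ q then ∑ p, u p q else 0) = ∑ p, ∑ q, if t ≤ q then u p q else 0 := by
    rw [Finset.sum_comm]
    refine Finset.sum_congr rfl fun p _ => ?_
    split_ifs <;> simp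
  rw [h1, h2]
  simp only [← Finset.sum_add_distrib]
  refine Finset.sum_congr rfl fun p _ => Finset.sum_congr rfl fun q _ => ?_
  rcases le_or_gt s p with h | h <;> rcases le_or_gt t q with h' | h' <;>
    simp [h, h', not_le.mpr, not_lt.mpr]

lemma quad_le (u v : ι → ι → ℕ) (hr : ∀ p, ∑ q, u p q = ∑ q, v p q)
    (hc : ∀ q, ∑ p, u p q = ∑ p, v p q)
    (hanti : ∀ p q p' q', u p q ≠ 0 → u p' q' ≠ 0 → p < p' → ¬ q < q') (s t : ι) :
    (∑ p, ∑ q, if s ≤ p ∧ t ≤ q then u p q else 0)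
      ≤ ∑ p, ∑ q, if s ≤ p ∧ t ≤ q then v p q else 0 := by
  by_cases h : (∑ p, ∑ q, if s ≤ p ∧ t ≤ q then u p q else 0) = 0
  · rw [h]; exact Nat.zero_le _
  obtain ⟨p', -, h⟩ := Finset.exists_ne_zero_of_sum_ne_zero h
  obtain ⟨q', -, h⟩ := Finset.exists_ne_zero_of_sum_ne_zero h
  have hpq : s ≤ p' ∧ t ≤ q' := by by_contra hh; simp [hh] at h
  rw [if_pos hpq] at h
  have hG : (∑ p, ∑ q, if p < s ∧ q < t then u p q else 0) = 0 := by
    refine Finset.sum_eq_zero fun p _ => Finset.sum_eq_zero fun q _ => ?_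
    split_ifs with hh
    · by_contra hne
      exact hanti p q p' q' hne h (hh.1.trans_le hpq.1) (hh.2.trans_le hpq.2)
    · rfl
  have e1 := quad_id u s t
  have e2 := quad_id v s t
  have e3 : ∑ p, ∑ q, u p q = ∑ p, ∑ q, v p q := Finset.sum_congr rfl fun p _ => hr p
  simp only [hr, hc] at e1
  omega

def Fq (ν : ι × ι →₀ ℕ) (s t : ι) : ℕ := ∑ p, ∑ q, if s ≤ p ∧ t ≤ q then ν (p, q) else 0

lemma tot_apply {n : ℕ} (N : ι × ι × Fin n →₀ ℕ) (p q : ι) :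
    tot N (p, q) = ∑ k, N (p, q, k) := by
  induction N using fs_ind with
  | h0 => simp [tot]
  | hs a =>
    obtain ⟨x, y, z⟩ := a
    simp only [tot, Finsupp.mapDomain_single, Finsupp.single_apply, Prod.mk.injEq]
    by_cases h1 : x = p <;> by_cases h2 : y = q <;> simp [h1, h2]
  | hadd f g hf hg => simp [tot_add, hf, hg, Finset.sum_add_distrib]

lemma marg_inl {n : ℕ} (N : ι × ι × Fin n →₀ ℕ) (p : ι) (k : Fin n) :
    marg N (p, Sum.inl k) = ∑ q, N (p, q, k) := by
  induction N using fs_ind with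
  | h0 => simp [marg]
  | hs a =>
    obtain ⟨x, y, z⟩ := a
    simp only [marg, Finsupp.mapDomain_single, Finsupp.add_apply, Finsupp.single_apply, Prod.mk.injEq]
    by_cases h1 : x = p <;> by_cases h2 : z = k <;> simp [h1, h2]
  | hadd f g hf hg => simp [marg_add, hf, hg, Finset.sum_add_distrib]

lemma marg_inr {n : ℕ} (N : ι × ι × Fin n →₀ ℕ) (q : ι) (k : Fin n) :
    marg N (q, Sum.inr k) = ∑ p, N (p, q, k) := by
  induction N using fs_ind with
  | h0 => simp [marg]
  | hs a =>
    obtain ⟨x, y, z⟩ := a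
    simp only [marg, Finsupp.mapDomain_single, Finsupp.add_apply, Finsupp.single_apply, Prod.mk.injEq]
    by_cases h1 : y = q <;> by_cases h2 : z = k <;> simp [h1, h2]
  | hadd f g hf hg => simp [marg_add, hf, hg, Finset.sum_add_distrib]

lemma Fq_tot {n : ℕ} (N : ι × ι × Fin n →₀ ℕ) (s t : ι) :
    Fq (tot N) s t = ∑ k, ∑ p, ∑ q, if s ≤ p ∧ t ≤ q then N (p, q, k) else 0 := by
  simp only [Fq, tot_apply]
  rw [Finset.sum_comm (s := (Finset.univ : Finset (Fin n)))]
  refine Finset.sum_congr rfl fun p _ => ?_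
  rw [Finset.sum_comm]
  refine Finset.sum_congr rfl fun q _ => ?_
  split_ifs <;> simp

lemma Fq_le {n : ℕ} (N M : ι × ι × Fin n →₀ ℕ) (h : marg N = marg M)
    (hanti : ∀ k p q p' q', N (p, q, k) ≠ 0 → N (p', q', k) ≠ 0 → p < p' → ¬ q < q')
    (s t : ι) : Fq (tot N) s t ≤ Fq (tot M) s t := by
  rw [Fq_tot, Fq_tot]
  refine Finset.sum_le_sum fun k _ => ?_
  refine quad_le (fun p q => N (p, q, k)) (fun p q => M (p, q, k)) ?_ ?_ (hanti k) s t
  · intro p; rw [← marg_inl, ← marg_inl, h]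
  · intro q; rw [← marg_inr, ← marg_inr, h]

def rk (p : ι) : ℕ := (Finset.univ.filter (fun s => s ≤ p)).card

lemma rk_strictMono : StrictMono (rk : ι → ℕ) := by
  intro p q hpq
  refine Finset.card_lt_card ?_
  rw [Finset.ssubset_iff_of_subset]
  · exact ⟨q, by simp, by simp [hpq]⟩
  · intro x; simp only [Finset.mem_filter, Finset.mem_univ, true_and]; exact fun h => h.trans hpq.le

def wt (ν : ι × ι →₀ ℕ) : ℕ := ∑ p, ∑ q, ν (p, q) * (rk p * rk q)

lemma wt_eq (ν : ι × ι →₀ ℕ) : wt ν = ∑ s, ∑ t, Fq ν s t := by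
  have : ∀ p q : ι, ν (p, q) * (rk p * rk q) = ∑ s, ∑ t, if s ≤ p ∧ t ≤ q then ν (p, q) else 0 := by
    intro p q
    simp only [rk, Finset.card_eq_sum_ones, Finset.sum_filter]
    rw [Finset.sum_mul_sum]
    simp only [Finset.mul_sum]
    refine Finset.sum_congr rfl fun s _ => Finset.sum_congr rfl fun t _ => ?_
    by_cases h1 : s ≤ p <;> by_cases h2 : t ≤ q <;> simp [h1, h2]
  simp only [wt, this, Fq]
  have e1 : ∀ p : ι, (∑ q, ∑ s, ∑ t, if s ≤ p ∧ t ≤ q then ν (p, q) else 0)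
      = ∑ s, ∑ t, ∑ q, if s ≤ p ∧ t ≤ q then ν (p, q) else 0 := by
    intro p
    rw [Finset.sum_comm]
    refine Finset.sum_congr rfl fun s _ => ?_
    rw [Finset.sum_comm]
  simp only [e1]
  rw [Finset.sum_comm]
  refine Finset.sum_congr rfl fun s _ => ?_
  rw [Finset.sum_comm]

lemma Fq_inj {ν μ : ι × ι →₀ ℕ} (h : ∀ s t, Fq ν s t = Fq μ s t) : ν = μ := by
  -- strong induction from the top
  have key : ∀ p : ι, ∀ q : ι, ν (p, q) = μ (p, q) := by
    intro p
    induction p using (wellFounded_gt (α := ι)).induction with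
    | _ p ihp =>
    intro q
    induction q using (wellFounded_gt (α := ι)).induction with
    | _ q ihq =>
    have := h p q
    simp only [Fq] at this
    have e : ∀ f : ι × ι →₀ ℕ, (∑ p', ∑ q', if p ≤ p' ∧ q ≤ q' then f (p', q') else 0)
        = f (p, q) + ∑ p', ∑ q', if p ≤ p' ∧ q ≤ q' ∧ (p', q') ≠ (p, q) then f (p', q') else 0 := by
      intro f
      have : f (p, q) = ∑ p', ∑ q', if (p', q') = (p, q) then f (p', q') else 0 := by
        simp [Prod.mk.injEq, ite_and]
      rw [this, ← Finset.sum_add_distrib]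
      refine Finset.sum_congr rfl fun p' _ => ?_
      rw [← Finset.sum_add_distrib]
      refine Finset.sum_congr rfl fun q' _ => ?_
      by_cases hh : (p', q') = (p, q)
      · obtain ⟨rfl, rfl⟩ := Prod.mk.inj hh; simp
      · simp [hh]
    rw [e ν, e μ] at this
    have e2 : (∑ p', ∑ q', if p ≤ p' ∧ q ≤ q' ∧ (p', q') ≠ (p, q) then ν (p', q') else 0)
       = ∑ p', ∑ q', if p ≤ p' ∧ q ≤ q' ∧ (p', q') ≠ (p, q) then μ (p', q') else 0 := by
      refine Finset.sum_congr rfl fun p' _ => Finset.sum_congr rfl fun q' _ => ?_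
      split_ifs with hh
      · rcases hh.1.eq_or_lt with h1 | h1
        · subst h1
          refine ihq q' (lt_of_le_of_ne hh.2.1 ?_)
          rintro rfl; exact hh.2.2 rfl
        · exact ihp p' h1 q'
      · rfl
    omega
  ext ⟨p, q⟩; exact key p q

/-- Chain-free sets can be coloured. -/
lemma coloring (k : ℕ) : ∀ S : Finset (ι × ι),
    (∀ f : Fin (k+1) → ι × ι, (∀ i, f i ∈ S) →
      ¬ (StrictMono (fun i => (f i).1) ∧ StrictMono (fun i => (f i).2))) →
    ∃ c : ι × ι → ℕ, (∀ g ∈ S, c g < k) ∧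
      ∀ g ∈ S, ∀ g' ∈ S, g.1 < g'.1 → g.2 < g'.2 → c g ≠ c g' := by
  induction k with
  | zero =>
    intro S hS
    have : ∀ g, g ∉ S := by
      intro g hg
      exact hS (fun _ => g) (fun _ => hg) ⟨fun i j h => by omega, fun i j h => by omega⟩
    exact ⟨fun _ => 0, fun g hg => absurd hg (this g), fun g hg => absurd hg (this g)⟩
  | succ k ih =>
    intro S hS
    set S' := S.filter (fun g => ∃ g' ∈ S, g'.1 < g.1 ∧ g'.2 < g.2) with hS'
    obtain ⟨c, hc1, hc2⟩ := ih S' (by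
      intro f hf ⟨hm1, hm2⟩
      have h0 := hf 0
      rw [hS', Finset.mem_filter] at h0
      obtain ⟨-, g', hg', h1, h2⟩ := h0
      refine hS (Fin.cons g' f) ?_ ⟨?_, ?_⟩
      · intro i
        refine Fin.cases ?_ (fun i => ?_) i
        · simpa using hg'
        · simpa using (Finset.mem_filter.mp (hf i)).1
      · rw [Fin.strictMono_iff_lt_succ]
        intro i
        refine Fin.cases ?_ (fun i => ?_) i
        · simpa using h1
        · have := hm1 (Fin.castSucc_lt_succ (i := i))
          simpa [← Fin.succ_castSucc] using this
      · rw [Fin.strictMono_iff_lt_succ]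
        intro i
        refine Fin.cases ?_ (fun i => ?_) i
        · simpa using h2
        · have := hm2 (Fin.castSucc_lt_succ (i := i))
          simpa [← Fin.succ_castSucc] using this)
    refine ⟨fun g => if g ∈ S' then c g else k, ?_, ?_⟩
    · intro g hg
      dsimp only
      split_ifs with h
      · have := hc1 g h; omega
      · omega
    · intro g hg g' hg' h1 h2
      have hm : g' ∈ S' := Finset.mem_filter.mpr ⟨hg', g, hg, h1, h2⟩
      dsimp only
      rw [if_pos hm]
      split_ifs with h
      · exact hc2 g h g' hm h1 h2
      · have := hc1 g' hm; omega

def Good (n : ℕ) (ν : ι × ι →₀ ℕ) : Prop :=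
  ∀ f : Fin (n+1) → ι × ι, (∀ i, f i ∈ ν.support) →
      ¬ (StrictMono (fun i => (f i).1) ∧ StrictMono (fun i => (f i).2))

lemma good_color {n : ℕ} (hn : 0 < n) (μ : ι × ι →₀ ℕ) (h : Good n μ) :
    ∃ N : ι × ι × Fin n →₀ ℕ, tot N = μ ∧
     ∀ k p q p' q', N (p, q, k) ≠ 0 → N (p', q', k) ≠ 0 → p < p' → ¬ q < q' := by
  obtain ⟨c, hc1, hc2⟩ := coloring n μ.support h
  let c' : ι × ι → Fin n := fun g => if hg : c g < n then ⟨c g, hg⟩ else ⟨0, hn⟩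
  refine ⟨μ.mapDomain (fun g => (g.1, g.2, c' g)), ?_, ?_⟩
  · rw [tot, ← Finsupp.mapDomain_comp]
    exact Finsupp.mapDomain_id
  · have key : ∀ k p q, μ.mapDomain (fun g => (g.1, g.2, c' g)) (p, q, k) ≠ 0 →
        (p, q) ∈ μ.support ∧ c (p, q) = k := by
      intro k p q hne
      have := Finsupp.mapDomain_support (Finsupp.mem_support_iff.mpr hne)
      obtain ⟨g, hg, hg'⟩ := Finset.mem_image.mp this
      obtain ⟨rfl, h2⟩ := Prod.mk.inj hg'
      obtain ⟨rfl, h2⟩ := Prod.mk.inj h2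
      refine ⟨hg, ?_⟩
      have h3 : c' g = k := (Prod.mk.inj h2).2
      rw [← h3]
      simp [c', hc1 g hg]
    intro k p q p' q' h1 h2 hp hq
    obtain ⟨m1, e1⟩ := key k p q h1
    obtain ⟨m2, e2⟩ := key k p' q' h2
    exact hc2 _ m1 _ m2 hp hq (e1.trans e2.symm)

lemma wt_add (a b : ι × ι →₀ ℕ) : wt (a + b) = wt a + wt b := by
  simp only [wt, Finsupp.add_apply, add_mul, Finset.sum_add_distrib]

lemma wt_single (g : ι × ι) : wt (Finsupp.single g 1) = rk g.1 * rk g.2 := by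
  obtain ⟨x, y⟩ := g
  simp only [wt, Finsupp.single_apply, Prod.mk.injEq, ite_and]
  simp

lemma wt_sum {α : Type} (s : Finset α) (f : α → ι × ι →₀ ℕ) :
    wt (∑ i ∈ s, f i) = ∑ i ∈ s, wt (f i) := by
  induction s using Finset.induction_on with
  | empty => simp [wt]
  | insert a s ha ih => rw [Finset.sum_insert ha, Finset.sum_insert ha, wt_add, ih]

lemma rearr {N : ℕ} (f g : Fin N → ℕ) (hf : StrictMono f) (hg : StrictMono g)
    (σ : Equiv.Perm (Fin N)) (hσ : σ ≠ 1) : ∑ i, f (σ i) * g i < ∑ i, f i * g i := by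
  have hm : Monovary f g := by
    intro i j hij
    exact (hf.lt_iff_lt.mpr (hg.lt_iff_lt.mp hij)).le
  rw [hm.sum_comp_perm_mul_lt_sum_mul_iff]
  intro hmv
  apply hσ
  have hmono : StrictMono σ := by
    have : Monotone σ := by
      intro i j hij
      rcases hij.eq_or_lt with rfl | h
      · exact le_rfl
      · exact hf.le_iff_le.mp (hmv (hg h))
    exact this.strictMono_of_injective σ.injective
  ext i
  have := (hmono.range_inj (g := (id : Fin N → Fin N)) strictMono_id).mp (by simp [σ.surjective.range_eq])
  simp [this]

end order

lemma det_mul_small {R : Type} [CommRing R] {n : ℕ} (A : Matrix (Fin (n+1)) (Fin n) R)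
    (B : Matrix (Fin n) (Fin (n+1)) R) : (A * B).det = 0 := by
  have : A * B = (Matrix.of fun (i : Fin (n+1)) (k : Fin (n+1)) =>
      (Fin.snoc (α := fun _ => R) (A i) 0 k : R)) *
      (Matrix.of fun (k : Fin (n+1)) (j : Fin (n+1)) =>
        (Fin.snoc (α := fun _ => R) (fun k => B k j) 0 k : R)) := by
    ext i j
    simp [Matrix.mul_apply, Fin.sum_univ_castSucc]
  rw [this, Matrix.det_mul, Matrix.det_eq_zero_of_column_eq_zero (Fin.last n), zero_mul]
  intro i
  simp

def minorIdeal (ι : Type) (n : ℕ) (K : Type) [CommRing K] : Ideal (MvPolynomial (ι × ι) K) :=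
  Ideal.span {D | ∃ xs ys : Fin (n+1) → ι, D = Matrix.det (Matrix.of fun i j => X (xs i, ys j))}

section order2
variable {ι : Type} [Fintype ι] [LinearOrder ι]

lemma span_good (n : ℕ) (K : Type) [CommRing K] : ∀ (w : ℕ) (ν : ι × ι →₀ ℕ), wt ν = w →
    (monomial ν (1:K)) ∈ (minorIdeal ι n K).restrictScalars K ⊔
      Submodule.span K {f | ∃ μ, Good n μ ∧ f = monomial μ (1:K)} := by
  intro w
  induction w using Nat.strong_induction_on with
  | _ w ih =>
  intro ν hν
  by_cases hg : Good n ν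
  · exact Submodule.mem_sup_right (Submodule.subset_span ⟨ν, hg, rfl⟩)
  simp only [Good, not_forall, not_not] at hg
  obtain ⟨f, hf, hf1, hf2⟩ := hg
  have hle : ∑ i, Finsupp.single (f i) 1 ≤ ν := by
    have hinj : Function.Injective f := by
      intro i j hij
      exact hf1.injective (by simp [hij])
    intro g
    rw [Finsupp.finsetSum_apply]
    simp only [Finsupp.single_apply]
    by_cases hgf : ∃ i, f i = g
    · obtain ⟨i, rfl⟩ := hgf
      have : ∀ x, (f x = f i) = (x = i) := fun x => by simp [hinj.eq_iff]
      simp only [this]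
      simp only [Finset.sum_ite_eq', Finset.mem_univ, if_true]
      have := Finsupp.mem_support_iff.mp (hf i)
      omega
    · push Not at hgf
      simp [hgf]
  obtain ⟨ν', rfl⟩ := exists_add_of_le hle
  set T : Equiv.Perm (Fin (n+1)) → (ι × ι →₀ ℕ) :=
    fun σ => ∑ i, Finsupp.single ((f (σ i)).1, (f i).2) 1 with hT
  have hprod : ∀ σ, (∏ i, (X ((f (σ i)).1, (f i).2) : MvPolynomial (ι × ι) K)) * monomial ν' 1
      = monomial (T σ + ν') 1 := by
    intro σ
    have : (∏ i, (X ((f (σ i)).1, (f i).2) : MvPolynomial (ι × ι) K)) = monomial (T σ) 1 := by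
      rw [hT, monomial_sum_one]; rfl
    rw [this, monomial_mul, one_mul]
  have hD : Matrix.det (Matrix.of fun i j => (X ((f i).1, (f j).2) : MvPolynomial (ι × ι) K))
      * monomial ν' 1 ∈ minorIdeal ι n K :=
    Ideal.mul_mem_right _ _ (Ideal.subset_span ⟨_, _, rfl⟩)
  rw [Matrix.det_apply, Finset.sum_mul, ← Finset.add_sum_erase _ _ (Finset.mem_univ 1)] at hD
  have hrest : (∑ σ ∈ Finset.univ.erase (1 : Equiv.Perm (Fin (n+1))),
      (Equiv.Perm.sign σ • ∏ i, (Matrix.of fun i j =>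
        (X ((f i).1, (f j).2) : MvPolynomial (ι × ι) K)) (σ i) i) * monomial ν' 1) ∈
        (minorIdeal ι n K).restrictScalars K ⊔
      Submodule.span K {f | ∃ μ, Good n μ ∧ f = monomial μ (1:K)} := by
    refine Submodule.sum_mem _ fun σ hσ => ?_
    have hσ : σ ≠ 1 := (Finset.mem_erase.mp hσ).1
    simp only [Matrix.of_apply, smul_mul_assoc, hprod]
    have hmem := ih (wt (T σ + ν')) (by
      rw [← hν, wt_add, wt_add]
      refine Nat.add_lt_add_right ?_ _
      rw [hT, wt_sum, wt_sum]
      simp only [wt_single]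
      exact rearr _ _ (rk_strictMono.comp hf1) (rk_strictMono.comp hf2) σ hσ) _ rfl
    rcases Int.units_eq_one_or (Equiv.Perm.sign σ) with h | h <;> rw [h]
    · simpa using hmem
    · simpa [Units.smul_def] using hmem
  have h1 : (Equiv.Perm.sign (1 : Equiv.Perm (Fin (n+1))) • ∏ i, (Matrix.of fun i j =>
        (X ((f i).1, (f j).2) : MvPolynomial (ι × ι) K)) ((1 : Equiv.Perm (Fin (n+1))) i) i)
        * monomial ν' 1 = monomial (∑ i, Finsupp.single (f i) 1 + ν') 1 := by
    have := hprod 1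
    simp only [Equiv.Perm.sign_one, one_smul, Matrix.of_apply, this, hT]
    simp
  rw [h1] at hD
  have h3 := Submodule.mem_sup_left (S := (minorIdeal ι n K).restrictScalars K)
    (T := Submodule.span K {f | ∃ μ, Good n μ ∧ f = monomial μ (1:K)}) hD
  have := Submodule.sub_mem _ h3 hrest
  simpa using this

theorem sft {n : ℕ} (hn : 0 < n) (K : Type) [Field K] [CharZero K]
    (F : MvPolynomial (ι × ι) K) (hF : Phi ι n K F = 0) : F ∈ minorIdeal ι n K := by
  have hall : F ∈ (minorIdeal ι n K).restrictScalars K ⊔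
      Submodule.span K {f | ∃ μ, Good n μ ∧ f = monomial μ (1:K)} := by
    rw [F.as_sum]
    refine Submodule.sum_mem _ fun ν _ => ?_
    have := Submodule.smul_mem _ (coeff ν F) (span_good n K _ ν rfl)
    simpa [smul_monomial] using this
  obtain ⟨I, hI, g, hg, rfl⟩ := Submodule.mem_sup.mp hall
  have hIz : ∀ I ∈ minorIdeal ι n K, Phi ι n K I = 0 := by
    intro I hI
    have : minorIdeal ι n K ≤ RingHom.ker (Phi ι n K) := by
      rw [minorIdeal, Ideal.span_le]
      rintro D ⟨xs, ys, rfl⟩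
      simp only [SetLike.mem_coe, RingHom.mem_ker]
      rw [AlgHom.map_det]
      let A : Matrix (Fin (n+1)) (Fin n) (MvPolynomial (Tau ι n) K) :=
        fun i k => X (xs i, Sum.inl k)
      let B : Matrix (Fin n) (Fin (n+1)) (MvPolynomial (Tau ι n) K) :=
        fun k j => X (ys j, Sum.inr k)
      have : ((Phi ι n K).mapMatrix (Matrix.of fun i j => X (xs i, ys j))) = A * B := by
        refine Matrix.ext fun i j => ?_
        rw [Matrix.mul_apply]
        simp [Phi, pr, A, B]
      rw [this]
      exact det_mul_small _ _
    exact this hI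
  have hg0 : Phi ι n K g = 0 := by
    rw [map_add, hIz I hI, zero_add] at hF; exact hF
  have hsupp : ∀ μ ∈ g.support, Good n μ := by
    have : Submodule.span K {f | ∃ μ : ι × ι →₀ ℕ, Good n μ ∧ f = monomial (μ : ι × ι →₀ ℕ) (1:K)} ≤
        MvPolynomial.restrictSupport K {μ : ι × ι →₀ ℕ | Good n μ} := by
      rw [Submodule.span_le]
      rintro f ⟨μ, hμ, rfl⟩
      simp [mem_restrictSupport_iff, support_monomial, hμ]
    exact fun μ hμ => (show (↑g.support : Set (ι × ι →₀ ℕ)) ⊆ {μ | Good n μ} from this hg) hμ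
  have : g = 0 := by
    by_contra hne
    obtain ⟨μ, hμ, hmax⟩ := Finset.exists_max_image g.support (wt (ι := ι))
      (Finset.nonempty_of_ne_empty (by simpa using hne))
    obtain ⟨N, rfl, hanti⟩ := good_color hn μ (hsupp μ hμ)
    have h0 : coeff (marg N) (Phi ι n K g) = 0 := by rw [hg0, coeff_zero]
    rw [g.as_sum, map_sum, coeff_sum, Finset.sum_eq_single (tot N)] at h0
    · have e : (monomial (tot N) (coeff (tot N) g)) = coeff (tot N) g • monomial (tot N) (1:K) := by
        simp [smul_monomial]
      rw [e, map_smul, coeff_smul, smul_eq_mul] at h0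
      rcases mul_eq_zero.mp h0 with h | h
      · exact mem_support_iff.mp hμ h
      · exact pos_color' N h
    · intro ν hν hne
      have e : (monomial ν (coeff ν g)) = coeff ν g • monomial ν (1:K) := by
        simp [smul_monomial]
      rw [e, map_smul, coeff_smul, smul_eq_mul]
      by_contra hh
      obtain ⟨M, rfl, hM⟩ := supp_color ν _ (right_ne_zero_of_mul hh)
      apply hne
      have hle := Fq_le N M hM.symm hanti
      have hw := hmax _ hν
      rw [wt_eq, wt_eq] at hw
      have heq : ∀ s t, Fq (tot N) s t = Fq (tot M) s t := by
        by_contra hcon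
        push Not at hcon
        obtain ⟨s, t, hst⟩ := hcon
        have : ∑ s, ∑ t, Fq (tot N) s t < ∑ s, ∑ t, Fq (tot M) s t :=
          Finset.sum_lt_sum (fun s _ => Finset.sum_le_sum fun t _ => hle s t)
            ⟨s, Finset.mem_univ _, Finset.sum_lt_sum (fun t _ => hle s t)
              ⟨t, Finset.mem_univ _, lt_of_le_of_ne (hle s t) hst⟩⟩
        omega
      exact (Fq_inj heq).symm
    · intro h; exact absurd hμ h
  rw [this, add_zero]; exact hI

end order2
end Sft
end

section
open scoped Classical
open MvPolynomial

namespace Sft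

section fischer
variable {σ : Type} [Fintype σ]

def fac (e : σ →₀ ℕ) : ℚ := ∏ i, ((e i).factorial : ℚ)

lemma fac_pos (e : σ →₀ ℕ) : 0 < fac e :=
  Finset.prod_pos fun i _ => by exact_mod_cast Nat.factorial_pos _

lemma fac_succ (e : σ →₀ ℕ) (i : σ) : fac (e + Finsupp.single i 1) = fac e * (e i + 1) := by
  unfold fac
  rw [← Finset.mul_prod_erase _ _ (Finset.mem_univ i),
    ← Finset.mul_prod_erase _ (fun j => ((e j).factorial : ℚ)) (Finset.mem_univ i)]
  have : ∏ x ∈ Finset.univ.erase i, (((e + Finsupp.single i 1 : σ →₀ ℕ) x).factorial : ℚ)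
      = ∏ x ∈ Finset.univ.erase i, ((e x).factorial : ℚ) := by
    refine Finset.prod_congr rfl fun j hj => ?_
    have : j ≠ i := (Finset.mem_erase.mp hj).1
    simp [Finsupp.single_apply, this.symm, this]
  rw [this]
  simp only [Finsupp.add_apply, Finsupp.single_eq_same, Nat.factorial_succ]
  push_cast
  ring

def fis : MvPolynomial σ ℚ →ₗ[ℚ] MvPolynomial σ ℚ →ₗ[ℚ] ℚ :=
  (basisMonomials σ ℚ).constr ℚ (fun e => fac e • lcoeff ℚ e)

lemma fis_monomial (e : σ →₀ ℕ) (g : MvPolynomial σ ℚ) :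
    fis (monomial e 1) g = fac e * coeff e g := by
  have : (monomial e (1:ℚ)) = basisMonomials σ ℚ e := by simp
  rw [this, fis, Module.Basis.constr_basis]
  simp [lcoeff_apply]

lemma fis_eq (f g : MvPolynomial σ ℚ) :
    fis f g = ∑ e ∈ f.support, fac e * (coeff e f * coeff e g) := by
  conv_lhs => rw [f.as_sum]
  rw [map_sum, LinearMap.sum_apply]
  refine Finset.sum_congr rfl fun e _ => ?_
  have : monomial e (coeff e f) = coeff e f • monomial e (1:ℚ) := by simp [smul_monomial]
  rw [this, map_smul, LinearMap.smul_apply, fis_monomial, smul_eq_mul]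
  ring

lemma fis_symm (f g : MvPolynomial σ ℚ) : fis f g = fis g f := by
  have h1 : fis f g = ∑ e ∈ f.support ∪ g.support, fac e * (coeff e f * coeff e g) := by
    rw [fis_eq]
    refine Finset.sum_subset Finset.subset_union_left fun e _ he => ?_
    simp [notMem_support_iff.mp he]
  have h2 : fis g f = ∑ e ∈ f.support ∪ g.support, fac e * (coeff e g * coeff e f) := by
    rw [fis_eq]
    refine Finset.sum_subset Finset.subset_union_right fun e _ he => ?_
    simp [notMem_support_iff.mp he]
  rw [h1, h2]
  exact Finset.sum_congr rfl fun e _ => by ring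

lemma fis_def (f : MvPolynomial σ ℚ) (h : fis f f = 0) : f = 0 := by
  rw [fis_eq, Finset.sum_eq_zero_iff_of_nonneg] at h
  · ext e
    by_cases he : e ∈ f.support
    · have := h e he
      have h2 := (fac_pos e).ne'
      simpa [h2] using this
    · simpa using notMem_support_iff.mp he
  · intro e _
    exact mul_nonneg (fac_pos e).le (mul_self_nonneg _)

lemma fis_X (i : σ) (f g : MvPolynomial σ ℚ) : fis (X i * f) g = fis f (pderiv i g) := by
  induction f using MvPolynomial.induction_on' with
  | monomial e a =>
    have h1 : monomial e a = a • monomial e (1:ℚ) := by simp [smul_monomial]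
    have h2 : X i * monomial e (1:ℚ) = monomial (e + Finsupp.single i 1) 1 := by
      rw [X, monomial_mul, one_mul, add_comm]
    rw [h1, mul_smul_comm, h2]
    simp only [map_smul, LinearMap.smul_apply, fis_monomial, coeff_pderiv, fac_succ]
    congr 1
    ring
  | add p q hp hq => simp only [mul_add, map_add, LinearMap.add_apply, hp, hq]

lemma orth_proj (U : Submodule ℚ (MvPolynomial σ ℚ)) [FiniteDimensional ℚ U]
    (v : MvPolynomial σ ℚ) : ∃ u ∈ U, ∀ u' ∈ U, fis (v - u) u' = 0 := by
  let T : U →ₗ[ℚ] Module.Dual ℚ U := (LinearMap.lcomp ℚ ℚ U.subtype).comp (fis.comp U.subtype)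
  have hT : ∀ u u' : U, T u u' = fis (u : MvPolynomial σ ℚ) u' := fun u u' => rfl
  have hinj : Function.Injective T := by
    rw [injective_iff_map_eq_zero]
    intro u hu
    have := hT u u
    rw [hu] at this
    exact Subtype.ext (fis_def _ this.symm)
  have hsurj : Function.Surjective T :=
    (LinearMap.injective_iff_surjective_of_finrank_eq_finrank
      (Subspace.dual_finrank_eq).symm).mp hinj
  obtain ⟨u, hu⟩ := hsurj ((fis v).comp U.subtype)
  refine ⟨u, u.2, fun u' hu' => ?_⟩
  have h1 := congrArg (fun φ => φ ⟨u', hu'⟩) hu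
  simp only [hT] at h1
  rw [map_sub, LinearMap.sub_apply, h1]
  simp

lemma deg_pderiv (i : σ) (f : MvPolynomial σ ℚ) (d : ℕ) (h : f.totalDegree ≤ d + 1) :
    (pderiv i f).totalDegree ≤ d := by
  rw [totalDegree, Finset.sup_le_iff]
  intro e he
  have h1 : e + Finsupp.single i 1 ∈ f.support := by
    rw [mem_support_iff, coeff_pderiv] at he
    rw [mem_support_iff]
    exact left_ne_zero_of_mul he
  have h2 := (le_totalDegree h1).trans h
  rw [Finsupp.sum_add_index' (by simp) (by simp), Finsupp.sum_single_index rfl] at h2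
  omega

end fischer

section pure
variable {ι : Type} [Fintype ι]

/-- chain rule -/
lemma chain {n : ℕ} (t : Tau ι n) (F : MvPolynomial (ι × ι) ℚ) :
    pderiv t (Phi ι n ℚ F) = ∑ g : ι × ι, Phi ι n ℚ (pderiv g F) * pderiv t (pr n ℚ g.1 g.2) := by
  induction F using MvPolynomial.induction_on with
  | C a => simp [Phi]
  | add p q hp hq => simp only [map_add, hp, hq, add_mul, Finset.sum_add_distrib]
  | mul_X p i hp =>
    have hX : Phi ι n ℚ (X i) = pr n ℚ i.1 i.2 := by simp [Phi]
    simp only [map_mul, pderiv_mul, hp, map_add, hX, Finset.sum_mul, add_mul,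
      Finset.sum_add_distrib]
    congr 1
    · exact Finset.sum_congr rfl fun g _ => by ring
    · rw [Finset.sum_eq_single i]
      · simp
      · intro g _ hg
        simp [pderiv_X_of_ne hg.symm]
      · simp

lemma pd_inr {n : ℕ} (p : ι) (k : Fin n) (g : ι × ι) :
    pderiv ((p, Sum.inr k) : Tau ι n) (pr n ℚ g.1 g.2) = if g.2 = p then X (g.1, Sum.inl k) else 0 := by
  simp only [pr, map_sum, pderiv_mul]
  rw [Finset.sum_eq_single k]
  · rw [pderiv_X_of_ne (by simp)]
    split_ifs with h
    · subst h; simp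
    · rw [pderiv_X_of_ne (by simp [h])]; simp
  · intro j _ hj
    rw [pderiv_X_of_ne (by simp), pderiv_X_of_ne (by simp [hj])]; simp
  · simp

lemma pd_inl {n : ℕ} (p : ι) (k : Fin n) (g : ι × ι) :
    pderiv ((p, Sum.inl k) : Tau ι n) (pr n ℚ g.1 g.2) = if g.1 = p then X (g.2, Sum.inr k) else 0 := by
  simp only [pr, map_sum, pderiv_mul]
  rw [Finset.sum_eq_single k]
  · rw [pderiv_X_of_ne (i := (p, Sum.inl k)) (j := (g.2, Sum.inr k)) (by simp)]
    split_ifs with h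
    · subst h; simp
    · rw [pderiv_X_of_ne (by simp [h])]; simp
  · intro j _ hj
    rw [pderiv_X_of_ne (by simp [hj]), pderiv_X_of_ne (by simp)]; simp
  · simp

def Dp (n : ℕ) (p : ι) (f : MvPolynomial (Tau ι n) ℚ) : MvPolynomial (Tau ι n) ℚ :=
  ∑ k : Fin n, pderiv (p, Sum.inl k) (pderiv (p, Sum.inr k) f)

lemma fis_Dp {n : ℕ} (p : ι) (f g : MvPolynomial (Tau ι n) ℚ) :
    fis (pr n ℚ p p * f) g = fis f (Dp n p g) := by
  simp only [pr, Dp, Finset.sum_mul, map_sum, LinearMap.sum_apply]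
  refine Finset.sum_congr rfl fun k _ => ?_
  rw [mul_comm (X (p, Sum.inl k)), mul_assoc, fis_X, fis_X]

lemma Dp_range {n : ℕ} (p : ι) (F : MvPolynomial (ι × ι) ℚ) :
    ∃ G, Dp n p (Phi ι n ℚ F) = Phi ι n ℚ G := by
  refine ⟨∑ r : ι, (∑ s : ι, X (r, s) * pderiv (p, s) (pderiv (r, p) F) ) + n • pderiv (p, p) F, ?_⟩
  have h1 : ∀ k : Fin n, pderiv ((p, Sum.inr k) : Tau ι n) (Phi ι n ℚ F)
      = ∑ r : ι, Phi ι n ℚ (pderiv (r, p) F) * X (r, Sum.inl k) := by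
    intro k
    rw [chain]
    simp only [pd_inr]
    rw [Fintype.sum_prod_type]
    refine Finset.sum_congr rfl fun r _ => ?_
    simp
  have h2 : ∀ (k : Fin n) G, pderiv ((p, Sum.inl k) : Tau ι n) (Phi ι n ℚ G)
      = ∑ s : ι, Phi ι n ℚ (pderiv (p, s) G) * X (s, Sum.inr k) := by
    intro k G
    rw [chain]
    simp only [pd_inl]
    rw [Fintype.sum_prod_type, Finset.sum_comm]
    refine Finset.sum_congr rfl fun r _ => ?_
    simp
  have hX : ∀ r s, Phi ι n ℚ (X (r, s)) = pr n ℚ r s := by intro r s; simp [Phi]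
  simp only [Dp, h1, map_sum, pderiv_mul, h2, Finset.sum_add_distrib, map_add, map_mul, hX, map_nsmul]
  congr 1
  · rw [Finset.sum_comm]
    refine Finset.sum_congr rfl fun r _ => ?_
    simp only [Finset.sum_mul]
    rw [Finset.sum_comm]
    refine Finset.sum_congr rfl fun s _ => ?_
    rw [pr, Finset.sum_mul]
    refine Finset.sum_congr rfl fun k _ => ?_
    ring
  · have : ∀ k : Fin n, (∑ r : ι, Phi ι n ℚ (pderiv (r, p) F) *
        pderiv ((p, Sum.inl k) : Tau ι n) (X (r, Sum.inl k))) = Phi ι n ℚ (pderiv (p, p) F) := by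
      intro k
      rw [Finset.sum_eq_single p]
      · simp
      · intro r _ hr
        rw [pderiv_X_of_ne (by simp [hr])]; simp
      · simp
    rw [Finset.sum_congr rfl fun k _ => this k]
    simp

lemma pure_rat {n : ℕ} (F : MvPolynomial (ι × ι) ℚ) (h : ι → MvPolynomial (Tau ι n) ℚ)
    (hF : Phi ι n ℚ F = ∑ p, pr n ℚ p p * h p) :
    ∃ G : ι → MvPolynomial (ι × ι) ℚ, Phi ι n ℚ F = Phi ι n ℚ (∑ p, X (p, p) * G p) := by
  set d := (Phi ι n ℚ F).totalDegree with hd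
  let Wl : (ι → MvPolynomial (ι × ι) ℚ) →ₗ[ℚ] MvPolynomial (Tau ι n) ℚ :=
    (Phi ι n ℚ).toLinearMap.comp
      (∑ p, (LinearMap.mulLeft ℚ (X (p, p))).comp (LinearMap.proj p))
  have hWl : ∀ G, Wl G = Phi ι n ℚ (∑ p, X (p, p) * G p) := by
    intro G; simp [Wl, LinearMap.sum_apply]
  have hX : ∀ r s, Phi ι n ℚ (X (r, s)) = pr n ℚ r s := by intro r s; simp [Phi]
  let U : Submodule ℚ (MvPolynomial (Tau ι n) ℚ) :=
    LinearMap.range Wl ⊓ restrictTotalDegree (Tau ι n) ℚ (d + 2)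
  haveI : FiniteDimensional ℚ U := Submodule.finiteDimensional_of_le inf_le_right
  obtain ⟨u, hu, horth⟩ := orth_proj U (Phi ι n ℚ F)
  obtain ⟨⟨G, hG⟩, hdeg⟩ := Submodule.mem_inf.mp hu
  rw [mem_restrictTotalDegree] at hdeg
  set f' := Phi ι n ℚ F - u with hf'
  have hf'W : ∃ H, f' = Phi ι n ℚ H := ⟨F - ∑ p, X (p, p) * G p, by
    rw [map_sub, ← hWl, hG]⟩
  have hf'd : f'.totalDegree ≤ d + 2 :=
    (totalDegree_sub _ _).trans (max_le (by omega) hdeg)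
  have hD : ∀ p, Dp n p f' = 0 := by
    intro p
    obtain ⟨H, hH⟩ := hf'W
    obtain ⟨H', hH'⟩ := Dp_range (n := n) p H
    rw [← hH] at hH'
    apply fis_def
    rw [← fis_Dp, fis_symm]
    apply horth
    refine Submodule.mem_inf.mpr ⟨⟨Pi.single p H', ?_⟩, ?_⟩
    · rw [hWl, hH', Finset.sum_eq_single p]
      · simp [hX]
      · intro q _ hq; simp [hq]
      · simp
    · rw [mem_restrictTotalDegree]
      refine (totalDegree_mul _ _).trans ?_
      have h1 : (pr n ℚ p p).totalDegree ≤ 2 := by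
        refine totalDegree_finsetSum_le fun k _ => ?_
        refine (totalDegree_mul _ _).trans ?_
        simp
      have h2 : (Dp n p f').totalDegree ≤ d := by
        refine totalDegree_finsetSum_le fun k _ => ?_
        exact deg_pderiv _ _ _ (deg_pderiv _ _ _ hf'd)
      omega
  have hf'0 : f' = 0 := by
    apply fis_def
    have : f' = ∑ p, pr n ℚ p p * (h p - Phi ι n ℚ (G p)) := by
      simp only [mul_sub, Finset.sum_sub_distrib]
      rw [← hF, hf', ← hG, hWl]
      simp [hX]
    conv_lhs => 
      arg 1
      rw [this]
    rw [map_sum, LinearMap.sum_apply]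
    refine Finset.sum_eq_zero fun p _ => ?_
    rw [fis_Dp, hD, map_zero]
  refine ⟨G, ?_⟩
  rw [← hWl, hG]
  exact sub_eq_zero.mp hf'0

end pure
end Sft
end

section
open scoped Classical
open MvPolynomial

namespace Sft

section prime
attribute [local instance] MvPolynomial.algebraMvPolynomial
variable (n : ℕ)

def qq (R : Type) [CommRing R] : MvPolynomial (Fin n ⊕ Fin n) R :=
  ∑ k : Fin n, X (Sum.inl k) * X (Sum.inr k)

lemma qq_map {R S : Type} [CommRing R] [CommRing S] (f : R →+* S) :
    map f (qq n R) = qq n S := by simp [qq]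

variable {n}
lemma qq_nzd (hn : 2 ≤ n) (R : Type) [CommRing R] (g : MvPolynomial (Fin n ⊕ Fin n) R)
    (h : qq n R * g = 0) : g = 0 := by
  by_contra hne
  let z : Fin n := ⟨0, by omega⟩
  obtain ⟨e, he, hmax⟩ := Finset.exists_max_image g.support (fun e => e (Sum.inl z))
      (Finset.nonempty_of_ne_empty (by simpa using hne))
  have h0 : coeff (Finsupp.single (Sum.inl z) 1 + Finsupp.single (Sum.inr z) 1 + e)
      (qq n R * g) = 0 := by rw [h, coeff_zero]
  have hm : ∀ k : Fin n, (X (Sum.inl k) * X (Sum.inr k) : MvPolynomial (Fin n ⊕ Fin n) R)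
      = monomial (Finsupp.single (Sum.inl k) 1 + Finsupp.single (Sum.inr k) 1) 1 := by
    intro k; rw [X, X, monomial_mul, one_mul]
  rw [qq, Finset.sum_mul, coeff_sum, Finset.sum_eq_single z] at h0
  · rw [hm, coeff_monomial_mul, one_mul] at h0
    exact mem_support_iff.mp he h0
  · intro k _ hk
    rw [hm, coeff_monomial_mul', one_mul]
    split_ifs with hle
    · by_contra hc
      have := hmax _ (mem_support_iff.mpr hc)
      simp [Finsupp.single_apply, hk] at this
    · rfl
  · simp

lemma qq_prime_field (hn : 2 ≤ n) (F : Type) [Field F] : (Ideal.span {qq n F}).IsPrime := by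
  have hirr : Irreducible (qq n F) := by
    have e : qq n F = sumSMulXSMulY (Finsupp.equivFunOnFinite.symm (fun _ : Fin n => (1:F))) := by
      rw [sumSMulXSMulY, Finsupp.linearCombination_apply, Finsupp.sum_fintype]
      · simp [qq]
      · simp
    rw [e]
    apply irreducible_sumSMulXSMulY
    · refine ⟨⟨0, by omega⟩, by simp, ⟨1, by omega⟩, by simp, by simp⟩
    · intro r hr
      have := hr ⟨0, by omega⟩
      simpa using isUnit_of_dvd_one this
  exact (Ideal.span_singleton_prime hirr.ne_zero).mpr hirr.prime

lemma qq_prime (hn : 2 ≤ n) (R : Type) [CommRing R] [IsDomain R] :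
    (Ideal.span {qq n R}).IsPrime := by
  let F := FractionRing R
  have hinj : Function.Injective (map (σ := Fin n ⊕ Fin n) (algebraMap R F)) :=
    map_injective _ (IsFractionRing.injective R F)
  have := qq_prime_field hn F
  have key : Ideal.span {qq n R} =
      (Ideal.span {qq n F}).comap (map (σ := Fin n ⊕ Fin n) (algebraMap R F)) := by
    apply le_antisymm
    · rw [Ideal.span_singleton_le_iff_mem, Ideal.mem_comap, qq_map]
      exact Ideal.mem_span_singleton_self _
    · intro h hh
      rw [Ideal.mem_comap, Ideal.mem_span_singleton] at hh
      obtain ⟨g, hg⟩ := hh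
      obtain ⟨⟨g', ⟨_, c, hc, rfl⟩⟩, hgg⟩ := IsLocalization.surj
        ((nonZeroDivisors R).map (C (σ := Fin n ⊕ Fin n))) g
      have hc0 : c ≠ 0 := nonZeroDivisors.ne_zero hc
      simp only at hgg
      have hgg' : g * map (algebraMap R F) (C c) = map (algebraMap R F) g' := hgg
      have e1 : h * C c = qq n R * g' := by
        apply hinj
        rw [map_mul, map_mul, hg, qq_map, ← hgg']
        ring
      have e2 : C c ∣ g' := by
        rw [C_dvd_iff_map_hom_eq_zero (Ideal.Quotient.mk (Ideal.span {c})) c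
          (fun r => by rw [Ideal.Quotient.eq_zero_iff_mem, Ideal.mem_span_singleton])]
        apply qq_nzd hn
        rw [← qq_map n (Ideal.Quotient.mk (Ideal.span {c})), ← map_mul, ← e1, map_mul, map_C]
        have : Ideal.Quotient.mk (Ideal.span {c}) c = 0 :=
          Ideal.Quotient.eq_zero_iff_mem.mpr (Ideal.mem_span_singleton_self _)
        rw [this, C_0, mul_zero]
      obtain ⟨g'', rfl⟩ := e2
      rw [Ideal.mem_span_singleton]
      refine ⟨g'', ?_⟩
      have hC : (C c : MvPolynomial (Fin n ⊕ Fin n) R) ≠ 0 := by simpa using hc0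
      apply mul_right_cancel₀ hC
      rw [e1]; ring
  rw [key]
  exact Ideal.IsPrime.comap _

def diagI (ι : Type) (n : ℕ) (R : Type) [CommRing R] : Ideal (MvPolynomial (Tau ι n) R) :=
  Ideal.span (Set.range fun p : ι => pr n R p p)

def optE (ι τ : Type) : Option ι × τ ≃ (ι × τ) ⊕ τ where
  toFun x := match x with
    | (none, t) => Sum.inr t
    | (some p, t) => Sum.inl (p, t)
  invFun x := match x with
    | Sum.inl (p, t) => (some p, t)
    | Sum.inr t => (none, t)
  left_inv := by rintro ⟨_ | p, t⟩ <;> rfl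
  right_inv := by rintro (⟨p, t⟩ | t) <;> rfl

def optM (ι : Type) (n : ℕ) (R : Type) [CommRing R] :
    MvPolynomial (Tau (Option ι) n) R ≃ₐ[R]
      MvPolynomial (Tau ι n) (MvPolynomial (Fin n ⊕ Fin n) R) :=
  (renameEquiv R (optE ι (Fin n ⊕ Fin n))).trans (sumAlgEquiv R _ _)

lemma optM_some (ι : Type) (R : Type) [CommRing R] (p : ι) (t) :
    optM ι n R (X (some p, t)) = X (p, t) := by
  simp [optM, optE]

lemma optM_none (ι : Type) (R : Type) [CommRing R] (t) :
    optM ι n R (X (none, t)) = C (X t) := by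
  simp [optM, optE]

lemma diag_prime (hn : 2 ≤ n) (ι : Type) [hι : Fintype ι] : ∀ (R : Type) [CommRing R] [IsDomain R],
    (diagI ι n R).IsPrime := by
  refine Fintype.induction_empty_option (P := fun ι _ => ∀ (R : Type) [CommRing R] [IsDomain R],
    (diagI ι n R).IsPrime) ?_ ?_ ?_ ι
  · intro α β _ e ih R _ _
    let E := (renameEquiv R (Equiv.prodCongr e (Equiv.refl (Fin n ⊕ Fin n)))).toRingEquiv
    have : diagI β n R = (diagI α n R).comap E.symm := by
      rw [Ideal.comap_symm, diagI, diagI, Ideal.map_span, ← Set.range_comp,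
        ← e.surjective.range_comp]
      congr 2
      funext p
      simp [pr, E]
    rw [this]
    have := ih R
    exact Ideal.IsPrime.comap _
  · intro R _ _
    have : diagI PEmpty n R = ⊥ := by
      rw [diagI, Set.range_eq_empty, Ideal.span_empty]
    rw [this]
    exact Ideal.isPrime_bot
  · intro ι _ ih R _ _
    have := qq_prime hn R
    let I := Ideal.span {qq n R}
    let R' := MvPolynomial (Fin n ⊕ Fin n) R ⧸ I
    have hp : (diagI ι n R').IsPrime := ih R'
    let μ : MvPolynomial (Tau (Option ι) n) R →+* MvPolynomial (Tau ι n) R' :=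
      (map (Ideal.Quotient.mk I)).comp (optM ι n R).toRingHom
    have hsurj : Function.Surjective μ :=
      (map_surjective _ Ideal.Quotient.mk_surjective).comp (optM ι n R).surjective
    have hsome : ∀ p, μ (pr n R (some p) (some p)) = pr n R' p p := by
      intro p
      simp [μ, pr, optM_some]
    have hnone' : optM ι n R (pr n R none none) = C (qq n R) := by
      simp [pr, optM_none, qq]
    have hq0 : Ideal.Quotient.mk I (qq n R) = 0 :=
      Ideal.Quotient.eq_zero_iff_mem.mpr (Ideal.mem_span_singleton_self _)
    have hnone : μ (pr n R none none) = 0 := by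
      have : μ (pr n R none none) = map (Ideal.Quotient.mk I) (optM ι n R (pr n R none none)) := rfl
      rw [this, hnone', map_C, hq0, C_0]
    have hker : RingHom.ker μ ≤ diagI (Option ι) n R := by
      intro f hf
      have h1 : map (Ideal.Quotient.mk I) (optM ι n R f) = 0 := hf
      have h2 : optM ι n R f ∈ RingHom.ker (map (σ := Tau ι n) (Ideal.Quotient.mk I)) := h1
      rw [MvPolynomial.ker_map, Ideal.mk_ker, Ideal.map_span, Set.image_singleton,
        Ideal.mem_span_singleton] at h2
      obtain ⟨g, hg⟩ := h2
      rw [← hnone'] at hg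
      have : f = pr n R none none * (optM ι n R).symm g := by
        apply (optM ι n R).injective
        rw [map_mul, hg, AlgEquiv.apply_symm_apply]
      rw [this]
      exact Ideal.mul_mem_right _ _ (Ideal.subset_span ⟨none, rfl⟩)
    have hmap : (diagI (Option ι) n R).map μ = diagI ι n R' := by
      rw [diagI, Ideal.map_span]
      apply le_antisymm
      · rw [Ideal.span_le]
        rintro _ ⟨_, ⟨o, rfl⟩, rfl⟩
        cases o with
        | none => simp [hnone]
        | some p => simp only [hsome]; exact Ideal.subset_span ⟨p, rfl⟩
      · rw [diagI, Ideal.span_le]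
        rintro _ ⟨p, rfl⟩
        exact Ideal.subset_span ⟨_, ⟨some p, rfl⟩, hsome p⟩
    have : diagI (Option ι) n R = (diagI ι n R').comap μ := by
      rw [← hmap, Ideal.comap_map_of_surjective' _ hsurj, sup_eq_left.mpr hker]
    rw [this]
    exact Ideal.IsPrime.comap _

end prime
end Sft
end

section
open scoped Classical
open MvPolynomial

namespace Sft

section descent
variable {σ : Type} {K : Type} [Field K] [CharZero K]

def cc (c : K →ₗ[ℚ] ℚ) (f : MvPolynomial σ K) : MvPolynomial σ ℚ :=
  ∑ e ∈ f.support, monomial e (c (coeff e f))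

lemma coeff_cc (c : K →ₗ[ℚ] ℚ) (f : MvPolynomial σ K) (e : σ →₀ ℕ) :
    coeff e (cc c f) = c (coeff e f) := by
  rw [cc, coeff_sum]
  simp only [coeff_monomial]
  rw [Finset.sum_ite_eq']
  split_ifs with h
  · rfl
  · rw [notMem_support_iff.mp h, map_zero]

lemma cc_add (c : K →ₗ[ℚ] ℚ) (f g : MvPolynomial σ K) : cc c (f + g) = cc c f + cc c g := by
  ext e; simp [coeff_cc]

lemma cc_sum (c : K →ₗ[ℚ] ℚ) {ι : Type} (s : Finset ι) (f : ι → MvPolynomial σ K) :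
    cc c (∑ i ∈ s, f i) = ∑ i ∈ s, cc c (f i) := by
  ext e; simp [coeff_cc, coeff_sum]

lemma cc_map_mul (c : K →ₗ[ℚ] ℚ) (g : MvPolynomial σ ℚ) (f : MvPolynomial σ K) :
    cc c (map (algebraMap ℚ K) g * f) = g * cc c f := by
  ext e
  rw [coeff_cc, coeff_mul, coeff_mul, map_sum]
  refine Finset.sum_congr rfl fun x _ => ?_
  rw [coeff_cc, coeff_map, ← Algebra.smul_def, map_smul, smul_eq_mul]

lemma cc_C_map (c : K →ₗ[ℚ] ℚ) (a : K) (g : MvPolynomial σ ℚ) :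
    cc c (C a * map (algebraMap ℚ K) g) = C (c a) * g := by
  rw [mul_comm, cc_map_mul, mul_comm]
  congr 1
  ext e
  rw [coeff_cc, coeff_C, coeff_C]
  split_ifs <;> simp

lemma cc_recon {I : Type} (b : Module.Basis I ℚ K) (f : MvPolynomial σ K) :
    ∃ S : Finset I, f = ∑ i ∈ S, C (b i) * map (algebraMap ℚ K) (cc (b.coord i) f) := by
  refine ⟨f.support.biUnion (fun e => (b.repr (coeff e f)).support), ?_⟩
  ext e
  rw [coeff_sum]
  simp only [coeff_C_mul, coeff_map, coeff_cc]
  by_cases he : e ∈ f.support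
  · conv_lhs => rw [← b.linearCombination_repr (coeff e f)]
    rw [Finsupp.linearCombination_apply, Finsupp.sum]
    refine (Finset.sum_subset (Finset.subset_biUnion_of_mem (fun e => (b.repr (coeff e f)).support) he) ?_).trans ?_
    · intro i _ hi
      rw [Finsupp.notMem_support_iff.mp hi, zero_smul]
    · refine Finset.sum_congr rfl fun i _ => ?_
      rw [Algebra.smul_def, mul_comm]; rfl
  · rw [notMem_support_iff.mp he]; simp
end descent

section pureK
variable {ι : Type} [Fintype ι] {K : Type} [Field K] [CharZero K]

lemma Phi_map {n : ℕ} (F : MvPolynomial (ι × ι) ℚ) :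
    Phi ι n K (map (algebraMap ℚ K) F) = map (algebraMap ℚ K) (Phi ι n ℚ F) := by
  induction F using MvPolynomial.induction_on with
  | C a => simp [Phi]
  | add p q hp hq => simp only [map_add, hp, hq]
  | mul_X p i hp => simp [map_mul, hp]; left; simp [Phi, pr]

lemma cc_Phi {n : ℕ} (c : K →ₗ[ℚ] ℚ) (F : MvPolynomial (ι × ι) K) :
    cc c (Phi ι n K F) = Phi ι n ℚ (cc c F) := by
  induction F using MvPolynomial.induction_on' with
  | monomial e a =>
    have h : monomial e a = C a * map (algebraMap ℚ K) (monomial e 1) := by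
      rw [map_monomial, C_mul_monomial]; simp
    rw [h, map_mul, Phi_map, cc_C_map]
    have : Phi ι n K (C a) = C a := by simp [Phi]
    rw [this, cc_C_map, map_mul]
    congr 1
    simp [Phi]
  | add p q hp hq => simp only [map_add, cc_add, hp, hq]

lemma pure_K {n : ℕ} (F : MvPolynomial (ι × ι) K) (h : ι → MvPolynomial (Tau ι n) K)
    (hF : Phi ι n K F = ∑ p, pr n K p p * h p) :
    ∃ G : ι → MvPolynomial (ι × ι) K, Phi ι n K F = Phi ι n K (∑ p, X (p, p) * G p) := by
  obtain ⟨b⟩ : Nonempty (Module.Basis (Module.Basis.ofVectorSpaceIndex ℚ K) ℚ K) :=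
    ⟨Module.Basis.ofVectorSpace ℚ K⟩
  have key : ∀ i, ∃ G : ι → MvPolynomial (ι × ι) ℚ,
      Phi ι n ℚ (cc (b.coord i) F) = Phi ι n ℚ (∑ p, X (p, p) * G p) := by
    intro i
    apply pure_rat (h := fun p => cc (b.coord i) (h p))
    rw [← cc_Phi, hF, cc_sum]
    refine Finset.sum_congr rfl fun p _ => ?_
    rw [← cc_map_mul]
    congr 2
    simp [pr]
  choose G hG using key
  obtain ⟨S, hS⟩ := cc_recon b F
  refine ⟨fun p => ∑ i ∈ S, C (b i) * map (algebraMap ℚ K) (G i p), ?_⟩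
  have hC : ∀ a, Phi ι n K (C a) = C a := fun a => by simp [Phi]
  conv_lhs => rw [hS]
  have : (∑ p, X (p, p) * ∑ i ∈ S, C (b i) * map (algebraMap ℚ K) (G i p))
      = ∑ i ∈ S, C (b i) * map (algebraMap ℚ K) (∑ p, X (p, p) * G i p) := by
    simp only [Finset.mul_sum, map_sum, map_mul, map_X]
    rw [Finset.sum_comm]
    refine Finset.sum_congr rfl fun i _ => Finset.sum_congr rfl fun p _ => by ring
  rw [this, map_sum, map_sum]
  refine Finset.sum_congr rfl fun i _ => ?_
  rw [map_mul, map_mul, Phi_map, Phi_map, hG]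

end pureK
end Sft
end

section
open scoped Classical
open MvPolynomial

namespace Sft

section assemble
variable {K : Type} [Field K] [CharZero K] {P : Set Circle1}

def liftS (K : Type) [Field K] (P : Set Circle1) : SwapRing K P →ₐ[K] MvPolynomial (↥P × ↥P) K :=
  rename Subtype.val

def dropS (K : Type) [Field K] (P : Set Circle1) : MvPolynomial (↥P × ↥P) K →ₐ[K] SwapRing K P :=
  aeval (fun g => gen K P g.1 g.2)

lemma dropS_liftS (z : SwapRing K P) : dropS K P (liftS K P z) = z := by
  have : (dropS K P).comp (liftS K P) = AlgHom.id K _ := by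
    ext ⟨g, hg⟩
    simp [dropS, liftS, gen, hg]
  exact DFunLike.congr_fun this z

lemma gen_self (p : ↥P) : gen K P p p = 0 := by simp [gen]

/-- any map of the generators killing the diagonal descends -/
lemma exists_hom {A : Type} [CommRing A] [Algebra K A] (v : ↥P → ↥P → A) (hv : ∀ p, v p p = 0) :
    ∃ f : SwapRing K P →ₐ[K] A, ∀ p q, f (gen K P p q) = v p q := by
  refine ⟨aeval (fun g => v g.1.1 g.1.2), fun p q => ?_⟩
  unfold gen
  split_ifs with h
  · simp
  · push Not at h; subst h; simp [hv]

lemma map_Dmat {A : Type} [CommRing A] (f : SwapRing K P →+* A) (m : ℕ) (xs ys : Fin m → ↥P) :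
    f (Dmat K P m xs ys) = Matrix.det (Matrix.of fun i j => f (gen K P (xs i) (ys j))) := by
  rw [Dmat, RingHom.map_det]
  rfl

lemma rot_ne {n : ℕ} (hn : 2 ≤ n) (k : Fin n) : finRotate n k ≠ k := by
  obtain ⟨n, rfl⟩ : ∃ k, n = k + 2 := ⟨n - 2, by omega⟩
  rw [finRotate_succ_apply]
  simp

lemma det_rot {n : ℕ} {ι : Type} [DecidableEq ι] (r : Fin n → ι) (hr : Function.Injective r) (A : Type) [CommRing A] :
    IsUnit (Matrix.det (Matrix.of fun i j => if r j = r (finRotate n i) then (1 : A) else 0)) := by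
  have : (Matrix.of fun i j => if r j = r (finRotate n i) then (1 : A) else 0)
      = (finRotate n).toPEquiv.toMatrix := by
    ext i j
    simp [PEquiv.toMatrix_apply, hr.eq_iff, eq_comm]
  rw [this, Matrix.det_permutation]
  rcases Int.units_eq_one_or (Equiv.Perm.sign (finRotate n)) with h | h <;> simp [h]

theorem nzd [Fintype ↥P] {n : ℕ} (hn : 2 ≤ n) (r : Fin n → ↥P) (hr : Function.Injective r)
    (z : SwapRing K P) (hz : z * Dmat K P n r r ∈ Rideal K P n) : z ∈ Rideal K P n := by
  letI : LinearOrder ↥P := LinearOrder.lift' (Fintype.equivFin ↥P) (Fintype.equivFin ↥P).injective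
  have hprime := diag_prime hn ↥P K
  let D := MvPolynomial (Tau ↥P n) K ⧸ diagI ↥P n K
  let mk : MvPolynomial (Tau ↥P n) K →ₐ[K] D := Ideal.Quotient.mkₐ K (diagI ↥P n K)
  have hmk : ∀ x, mk x = 0 ↔ x ∈ diagI ↥P n K := fun x => Ideal.Quotient.eq_zero_iff_mem
  have hdiag : ∀ p, mk (pr n K p p) = 0 := fun p =>
    (hmk _).mpr (Ideal.subset_span ⟨p, rfl⟩)
  have hPX : ∀ p q, Phi ↥P n K (X (p, q)) = pr n K p q := fun p q => by simp [Phi]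
  let Ψ : SwapRing K P →ₐ[K] D := (mk.comp (Phi ↥P n K)).comp (liftS K P)
  have hgen : ∀ p q, Ψ (gen K P p q) = mk (pr n K p q) := by
    intro p q
    unfold gen
    split_ifs with h
    · have : liftS K P (X ⟨(p, q), h⟩) = X (p, q) := by simp [liftS]
      simp only [Ψ, AlgHom.comp_apply, this, hPX]
    · push Not at h; subst h; rw [map_zero, hdiag]
  have hker : Rideal K P n ≤ RingHom.ker Ψ.toRingHom := by
    rw [Rideal, Ideal.span_le]
    rintro _ ⟨xs, ys, rfl⟩
    change Ψ.toRingHom _ = 0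
    rw [map_Dmat]
    let A : Matrix (Fin (n+1)) (Fin n) D := Matrix.of fun i k => mk (X (xs i, Sum.inl k))
    let B : Matrix (Fin n) (Fin (n+1)) D := Matrix.of fun k j => mk (X (ys j, Sum.inr k))
    have : (Matrix.of fun i j => Ψ.toRingHom (gen K P (xs i) (ys j))) = A * B := by
      refine Matrix.ext fun i j => ?_
      rw [Matrix.mul_apply]
      refine (hgen _ _).trans ?_
      simp [pr, A, B]
    rw [this]
    exact det_mul_small _ _
  have h0 : Ψ z * Ψ (Dmat K P n r r) = 0 := by
    rw [← map_mul]; exact hker hz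
  have hD0 : Ψ (Dmat K P n r r) ≠ 0 := by
    intro hc
    let ev : MvPolynomial (Tau ↥P n) K →ₐ[K] K := aeval (fun t => match t with
      | (p, Sum.inl k) => if p = r k then 1 else 0
      | (p, Sum.inr k) => if p = r (finRotate n k) then 1 else 0)
    have hev : ∀ p q, ev (pr n K p q) =
        ∑ k, (if p = r k then 1 else 0) * (if q = r (finRotate n k) then 1 else 0) := by
      intro p q; simp only [pr, map_sum, map_mul, ev, aeval_X]
    have hevd : ∀ x ∈ diagI ↥P n K, ev x = 0 := by
      have : diagI ↥P n K ≤ RingHom.ker ev.toRingHom := by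
        rw [diagI, Ideal.span_le]
        rintro _ ⟨p, rfl⟩
        change ev _ = 0
        rw [hev]
        refine Finset.sum_eq_zero fun k _ => ?_
        by_cases h1 : p = r k
        · subst h1
          rw [if_neg (c := r k = r (finRotate n k)) (fun h => rot_ne hn k (hr h).symm), mul_zero]
        · rw [if_neg h1, zero_mul]
      exact fun x hx => this hx
    have h1 : Ψ.toRingHom (Dmat K P n r r) = 0 := hc
    rw [map_Dmat] at h1
    have h2 : (Matrix.of fun i j => Ψ.toRingHom (gen K P (r i) (r j)))
        = mk.toRingHom.mapMatrix (Matrix.of fun i j => pr n K (r i) (r j)) := by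
      refine Matrix.ext fun i j => hgen _ _
    rw [h2, ← RingHom.map_det] at h1
    have h3 := hevd _ ((hmk _).mp h1)
    have h4 : ev.toRingHom (Matrix.det (Matrix.of fun i j => pr n K (r i) (r j))) = 0 := h3
    rw [RingHom.map_det] at h4
    have h5 : ev.toRingHom.mapMatrix (Matrix.of fun i j => pr n K (r i) (r j)) =
        (Matrix.of fun i j => if r j = r (finRotate n i) then (1 : K) else 0) := by
      refine Matrix.ext fun i j => ?_
      refine (hev _ _).trans ?_
      rw [Finset.sum_eq_single i]
      · simp
      · intro k _ hk
        rw [if_neg (fun h => hk (hr h).symm), zero_mul]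
      · simp
    rw [h5] at h4
    exact (det_rot r hr K).ne_zero h4
  have hΨ : Ψ z = 0 := (mul_eq_zero.mp h0).resolve_right hD0
  have hin : Phi ↥P n K (liftS K P z) ∈ diagI ↥P n K := (hmk _).mp hΨ
  rw [diagI, Ideal.mem_span_range_iff_exists_fun] at hin
  obtain ⟨c, hc⟩ := hin
  obtain ⟨G, hG⟩ := pure_K (liftS K P z) c (by
    rw [← hc]; exact Finset.sum_congr rfl fun p _ => mul_comm _ _)
  have hmin := sft (by omega : 0 < n) K (liftS K P z - ∑ p, X (p, p) * G p) (by
    rw [map_sub, hG, sub_self])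
  have hle : minorIdeal ↥P n K ≤ (Rideal K P n).comap (dropS K P).toRingHom := by
    rw [minorIdeal, Ideal.span_le]
    rintro _ ⟨xs, ys, rfl⟩
    refine Ideal.subset_span ⟨xs, ys, ?_⟩
    rw [RingHom.map_det, Dmat]
    congr 1
    refine Matrix.ext fun i j => ?_
    simp [dropS]
  have h9 : dropS K P (liftS K P z - ∑ p, X (p, p) * G p) ∈ Rideal K P n := hle hmin
  rw [map_sub, dropS_liftS, map_sum] at h9
  have h10 : ∑ p, dropS K P (X (p, p) * G p) = 0 := by
    refine Finset.sum_eq_zero fun p _ => ?_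
    rw [map_mul]
    have : dropS K P (X (p, p)) = 0 := by simp [dropS, gen_self]
    rw [this, zero_mul]
  rwa [h10, sub_zero] at h9

end assemble
end Sft
end

section
open scoped Classical
open MvPolynomial

namespace Sft

lemma sgn_id (b c : ℝ) : sgnQ (b + c) * sgnQ b * sgnQ c = sgnQ b + sgnQ c - sgnQ (b + c) := by
  unfold sgnQ
  split_ifs <;> first | (exfalso; linarith) | norm_num
  all_goals (exfalso; rcases lt_trichotomy b 0 with h | h | h <;> rcases lt_trichotomy c 0 with h' | h' | h' <;> simp_all <;> linarith)

lemma sgn_neg (b : ℝ) : sgnQ (-b) = - sgnQ b := by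
  unfold sgnQ
  rcases lt_trichotomy b 0 with h | h | h
  · simp [h, h.le, h.ne, not_lt.mpr h.le]
  · simp [h]
  · simp [h, h.le, h.ne', not_lt.mpr h.le]

lemma sgn_neg' (b c : ℝ) : sgnQ (b - c) = - sgnQ (c - b) := by
  rw [← sgn_neg]; congr 1; ring

/-- sign of the difference of coordinates -/
def sg (o p q : Circle1) : ℚ := sgnQ (coordAt o p - coordAt o q)

lemma sg_anti (o p q : Circle1) : sg o p q = - sg o q p := sgn_neg' _ _

lemma linkingAt_eq (o r x s y : Circle1) : linkingAt o r x s y =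
    (1/2) * (sg o r y + sg o y x - sg o r s - sg o s x) := by
  have h1 := sgn_id (coordAt o r - coordAt o y) (coordAt o y - coordAt o x)
  have h2 := sgn_id (coordAt o r - coordAt o s) (coordAt o s - coordAt o x)
  rw [sub_add_sub_cancel] at h1 h2
  unfold linkingAt sg
  rw [h1, h2]; ring

lemma coordAt_mem (o x : Circle1) : 0 ≤ coordAt o x ∧ coordAt o x < 1 := by
  have := ((AddCircle.equivIco 1 0) (x - o)).2
  simpa [coordAt] using this

lemma coordAt_coe (o x : Circle1) : ((coordAt o x : ℝ) : Circle1) = x - o :=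
  (AddCircle.equivIco 1 0).symm_apply_apply (x - o)

lemma coord_unique (u v : ℝ) (hu : 0 ≤ u ∧ u < 1) (hv : 0 ≤ v ∧ v < 1)
    (h : (u : Circle1) = (v : Circle1)) : u = v :=
  (AddCircle.coe_eq_coe_iff_of_mem_Ico (p := (1:ℝ)) (a := 0) (by simpa using hu) (by simpa using hv)).mp h

lemma coord_change (o o' x : Circle1) : coordAt o' x =
    coordAt o x - coordAt o o' + (if coordAt o x < coordAt o o' then 1 else 0) := by
  have h1 := coordAt_mem o x
  have h2 := coordAt_mem o o'
  apply coord_unique _ _ (coordAt_mem _ _)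
  · split_ifs <;> constructor <;> linarith
  · rw [coordAt_coe]
    split_ifs
    · rw [AddCircle.coe_add, AddCircle.coe_sub, coordAt_coe, coordAt_coe, AddCircle.coe_period]
      abel
    · rw [add_zero, AddCircle.coe_sub, coordAt_coe, coordAt_coe]
      abel

lemma sg_change (o o' x y : Circle1) : sg o' x y = sg o x y +
    2 * ((if coordAt o x < coordAt o o' then 1 else 0) - (if coordAt o y < coordAt o o' then 1 else 0)) := by
  have h1 := coordAt_mem o x
  have h2 := coordAt_mem o o'
  have h3 := coordAt_mem o y
  unfold sg
  rw [coord_change o o' x, coord_change o o' y]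
  unfold sgnQ
  split_ifs <;> first | (exfalso; linarith) | norm_num
  all_goals (exfalso; simp_all <;> grind)

lemma linkQ_eq (o r x s y : Circle1) : linkQ r x s y =
    (1/2) * (sg o r y + sg o y x - sg o r s - sg o s x) := by
  rw [linkQ, linkingAt_eq]
  generalize (exists_cut r x s y).choose = o'
  rw [sg_change o o' r y, sg_change o o' y x, sg_change o o' r s, sg_change o o' s x]
  ring

def sI (k l : ℕ) : ℚ := if k < l then -1 else if k = l then 0 else 1

lemma cfg {m : ℕ} {a : ℕ → Circle1}
    (h : AnticlockwiseList ((List.range m).map (fun k => a (k+1)))) :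
    ∃ o : Circle1, ∀ k l, 1 ≤ k → k ≤ m → 1 ≤ l → l ≤ m → sg o (a k) (a l) = sI k l := by
  obtain ⟨o, -, hc⟩ := h
  refine ⟨o, ?_⟩
  have hp : (((List.range m).map (fun k => a (k+1))).map (coordAt o)).Pairwise (· < ·) :=
    List.isChain_iff_pairwise.mp hc
  rw [List.pairwise_iff_getElem] at hp
  have hlt : ∀ k l, 1 ≤ k → k < l → l ≤ m → coordAt o (a k) < coordAt o (a l) := by
    intro k l hk hkl hl
    have := hp (k-1) (l-1) (by simp; omega) (by simp; omega) (by omega)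
    simp only [List.getElem_map, List.getElem_range] at this
    rwa [Nat.sub_add_cancel hk, Nat.sub_add_cancel (by omega)] at this
  intro k l hk hk' hl hl'
  unfold sg sI sgnQ
  rcases lt_trichotomy k l with h | h | h
  · have := hlt k l hk h hl'
    rw [if_pos (by linarith), if_pos h]
  · subst h; simp
  · have := hlt l k hl h hk'
    rw [if_neg (by linarith), if_neg (by intro; linarith), if_neg (by omega), if_neg (by omega)]

lemma sEq_eq (i j i' j' : ℕ) : sEq i j i' j' = (1/2) * (sI j j' + sI i' i) := by
  unfold sEq sI
  split_ifs <;> first | (exfalso; omega) | norm_num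

end Sft
end

section
open scoped Classical
open MvPolynomial

namespace Sft

section comp
variable {A : Type} [CommRing A]

lemma opt_sum {n : ℕ} (u v : Option (Fin n) → A) (hu : ∑ o, u o = 0) (hv : ∑ o, v o = 0)
    (f g : Option (Fin n) → A) (k : A) (S : Option (Fin n) → Option (Fin n) → A)
    (h1 : ∀ i, S none (some i) = 1) (h2 : ∀ i, S (some i) none = -1) :
    ∑ o, ∑ o', u o * v o' * (f o + k - S o o' - g o') =
      - ∑ i, ∑ i', u (some i) * v (some i') * (S none none + S (some i) (some i')) := by
  have e1 : ∑ o, ∑ o', u o * v o' * (f o + k - S o o' - g o') =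
      (∑ o, u o * f o) * (∑ o', v o') + (∑ o, u o) * (∑ o', v o' * k)
      - (∑ o, ∑ o', u o * v o' * S o o') - (∑ o, u o) * (∑ o', v o' * g o') := by
    simp only [Finset.sum_mul_sum, ← Finset.sum_add_distrib, ← Finset.sum_sub_distrib]
    refine Finset.sum_congr rfl fun o _ => Finset.sum_congr rfl fun o' _ => by ring
  rw [e1, hu, hv]
  rw [Fintype.sum_option] at hu hv
  have hu' : u none = - ∑ i, u (some i) := eq_neg_of_add_eq_zero_left hu
  have hv' : v none = - ∑ i, v (some i) := eq_neg_of_add_eq_zero_left hv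
  simp only [Fintype.sum_option, h1, h2]
  rw [Finset.sum_add_distrib]
  have e2 : ∑ i, ∑ i', u (some i) * v (some i') * (S none none + S (some i) (some i')) =
     (∑ i, u (some i)) * (∑ i, v (some i)) * S none none +
      ∑ i, ∑ i', u (some i) * v (some i') * S (some i) (some i') := by
    rw [Finset.sum_mul_sum]
    simp only [Finset.sum_mul, ← Finset.sum_add_distrib]
    refine Finset.sum_congr rfl fun o _ => Finset.sum_congr rfl fun o' _ => by ring
  have e3 : ∑ i, u none * v (some i) * 1 = u none * ∑ i, v (some i) := by
    rw [Finset.mul_sum]; exact Finset.sum_congr rfl fun i _ => by ring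
  have e4 : ∑ i, u (some i) * v none * -1 = - ((∑ i, u (some i)) * v none) := by
    rw [Finset.sum_mul, ← Finset.sum_neg_distrib]; exact Finset.sum_congr rfl fun i _ => by ring
  rw [e2, e3, e4, hu', hv']
  ring

lemma cancel_mat {n : ℕ} (M : Matrix (Fin n) (Fin n) A) (hM : IsUnit M.det) (y : Fin n → A)
    (h : ∀ q, ∑ i, M i q * y i = 0) : ∀ i, y i = 0 := by
  have h1 : Matrix.vecMul y M = 0 := by
    funext q
    rw [Matrix.vecMul, dotProduct]
    simpa [mul_comm] using h q
  have h2 : Matrix.vecMul (Matrix.vecMul y M) M⁻¹ = y := by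
    rw [Matrix.vecMul_vecMul, Matrix.mul_nonsing_inv _ hM, Matrix.vecMul_one]
  rw [h1, Matrix.zero_vecMul] at h2
  intro i; rw [← h2]; rfl

lemma comp {P : Type} {n : ℕ} (x σ : P → P → A) (h c1 c2 : A) (B : A → A → A)
    (addL : ∀ a b c, B (a + b) c = B a c + B b c)
    (addR : ∀ a b c, B a (b + c) = B a b + B a c)
    (leibL : ∀ a b c, B (a * b) c = a * B b c + b * B a c)
    (leibR : ∀ a b c, B a (b * c) = b * B a c + c * B a b)
    (hx : ∀ r q s q', B (x r q) (x s q') = h * (σ r q' + σ q' q - σ r s - σ s q) *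
      (c1 * (x r q' * x s q) + c2 * (x r q * x s q')))
    (e : Fin n → P) (E : Fin n → P → A) (hE : ∀ p q, x p q = ∑ i, E i p * x (e i) q)
    (hdet : IsUnit (Matrix.det (Matrix.of fun i j => x (e i) (e j))))
    (p p' : P) (hs1 : ∀ i, σ p (e i) = 1) (hs2 : ∀ i, σ (e i) p' = -1) (i i' : Fin n) :
    B (E i p) (E i' p') + h * (c1 * (E i' p * E i p') * (σ p p' + σ (e i') (e i))
      + c2 * (E i p * E i' p') * (σ p p' + σ (e i) (e i'))) = 0 := by
  have sumL : ∀ (f : Fin n → A) c, B (∑ i, f i) c = ∑ i, B (f i) c := by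
    intro f c
    let φ : A →+ A := AddMonoidHom.mk' (fun a => B a c) (fun a b => addL a b c)
    exact map_sum φ f Finset.univ
  have sumR : ∀ (f : Fin n → A) c, B c (∑ i, f i) = ∑ i, B c (f i) := by
    intro f c
    let φ : A →+ A := AddMonoidHom.mk' (fun a => B c a) (fun a b => addR c a b)
    exact map_sum φ f Finset.univ
  let r : P → Option (Fin n) → P := fun p o => o.elim p e
  let c : P → Option (Fin n) → A := fun p o => o.elim 1 (fun i => - E i p)
  have hc : ∀ p q, ∑ o, c p o * x (r p o) q = 0 := by
    intro p q
    rw [Fintype.sum_option]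
    simp only [c, r, Option.elim]
    rw [one_mul, hE p q, ← Finset.sum_add_distrib]
    exact Finset.sum_eq_zero fun i _ => by ring
  have S1 : ∀ p q w, ∑ i, x (e i) q * B (E i p) w = ∑ o, c p o * B (x (r p o) q) w := by
    intro p q w
    rw [Fintype.sum_option]
    simp only [c, r, Option.elim]
    rw [one_mul, hE p q, sumL, ← Finset.sum_add_distrib]
    refine Finset.sum_congr rfl fun i _ => ?_
    rw [leibL]; ring
  have S2 : ∀ p q w, ∑ i, x (e i) q * B w (E i p) = ∑ o, c p o * B w (x (r p o) q) := by
    intro p q w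
    rw [Fintype.sum_option]
    simp only [c, r, Option.elim]
    rw [one_mul, hE p q, sumR, ← Finset.sum_add_distrib]
    refine Finset.sum_congr rfl fun i _ => ?_
    rw [leibR]; ring
  have main : ∀ q q', ∑ i, x (e i) q * ∑ i', x (e i') q' * B (E i p) (E i' p') =
      - ∑ i, x (e i) q * ∑ i', x (e i') q' * (h * (c1 * (E i' p * E i p') * (σ p p' + σ (e i') (e i))
      + c2 * (E i p * E i' p') * (σ p p' + σ (e i) (e i')))) := by
    intro q q'
    have t1 : ∑ i, x (e i) q * ∑ i', x (e i') q' * B (E i p) (E i' p') =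
        ∑ o, ∑ o', c p o * c p' o' * B (x (r p o) q) (x (r p' o') q') := by
      calc _ = ∑ i', x (e i') q' * ∑ i, x (e i) q * B (E i p) (E i' p') := by
            simp only [Finset.mul_sum]
            rw [Finset.sum_comm]
            refine Finset.sum_congr rfl fun o _ => Finset.sum_congr rfl fun o' _ => by ring
        _ = ∑ o, c p o * ∑ i', x (e i') q' * B (x (r p o) q) (E i' p') := by
            simp only [S1, Finset.mul_sum]
            rw [Finset.sum_comm]
            refine Finset.sum_congr rfl fun o _ => Finset.sum_congr rfl fun o' _ => by ring
        _ = _ := by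
            simp only [S2, Finset.mul_sum]
            refine Finset.sum_congr rfl fun o _ => Finset.sum_congr rfl fun o' _ => by ring
    have o1 := opt_sum (fun o => c p o * x (r p o) q) (fun o => c p' o * x (r p' o) q')
      (hc p q) (hc p' q') (fun o => σ (r p o) q') (fun o => σ (r p' o) q) (σ q' q)
      (fun o o' => σ (r p o) (r p' o')) hs1 hs2
    have o2 := opt_sum (fun o => c p o * x (r p o) q') (fun o => c p' o * x (r p' o) q)
      (hc p q') (hc p' q) (fun o => σ (r p o) q') (fun o => σ (r p' o) q) (σ q' q)
      (fun o o' => σ (r p o) (r p' o')) hs1 hs2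
    have t2 : ∑ o, ∑ o', c p o * c p' o' * B (x (r p o) q) (x (r p' o') q') =
       h * c1 * (∑ o, ∑ o', c p o * x (r p o) q' * (c p' o' * x (r p' o') q) *
        (σ (r p o) q' + σ q' q - σ (r p o) (r p' o') - σ (r p' o') q)) +
       h * c2 * (∑ o, ∑ o', c p o * x (r p o) q * (c p' o' * x (r p' o') q') *
        (σ (r p o) q' + σ q' q - σ (r p o) (r p' o') - σ (r p' o') q)) := by
      simp only [Finset.mul_sum, ← Finset.sum_add_distrib]
      refine Finset.sum_congr rfl fun o _ => Finset.sum_congr rfl fun o' _ => ?_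
      rw [hx]; ring
    rw [t1, t2, o1, o2, Finset.sum_comm (s := Finset.univ (α := Fin n)) (t := Finset.univ (α := Fin n))]
    simp only [c, r, Option.elim, mul_neg, ← Finset.sum_neg_distrib, Finset.mul_sum,
      ← Finset.sum_add_distrib]
    refine Finset.sum_congr rfl fun o _ => Finset.sum_congr rfl fun o' _ => ?_
    ring
  have main2 : ∀ q, ∀ i, ∑ i', x (e i') (e q) * (B (E i p) (E i' p') +
      h * (c1 * (E i' p * E i p') * (σ p p' + σ (e i') (e i))
      + c2 * (E i p * E i' p') * (σ p p' + σ (e i) (e i')))) = 0 := by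
    intro q'
    apply cancel_mat _ hdet
    intro q
    have := main (e q) (e q')
    rw [eq_neg_iff_add_eq_zero] at this
    rw [← this]
    simp only [mul_add, Finset.sum_add_distrib, Matrix.of_apply]
  exact cancel_mat _ hdet _ (fun q => main2 q i) i'

end comp
end Sft
end

section
open scoped Classical
open MvPolynomial

namespace Sft

section cramer
variable {A : Type} [CommRing A]

lemma cramer {P : Type} {n : ℕ} (x : P → P → A)
    (hmin : ∀ xs ys : Fin (n+1) → P, Matrix.det (Matrix.of fun i j => x (xs i) (ys j)) = 0)
    (e : Fin n → P) (hdet : IsUnit (Matrix.det (Matrix.of fun i j => x (e i) (e j)))) :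
    ∃ E : Fin n → P → A, ∀ p q, x p q = ∑ i, E i p * x (e i) q := by
  set X0 : Matrix (Fin n) (Fin n) A := Matrix.of fun i j => x (e i) (e j) with hX0
  letI : Invertible X0.det := hdet.invertible
  letI : Invertible X0 := Matrix.invertibleOfDetInvertible X0
  refine ⟨fun i p => Matrix.vecMul (fun j => x p (e j)) (⅟X0) i, fun p q => ?_⟩
  let Cc : Matrix (Fin 1) (Fin n) A := Matrix.of fun _ j => x p (e j)
  let Bb : Matrix (Fin n) (Fin 1) A := Matrix.of fun i _ => x (e i) q
  let Dd : Matrix (Fin 1) (Fin 1) A := Matrix.of fun _ _ => x p q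
  have h1 : (Matrix.fromBlocks X0 Bb Cc Dd).det = 0 := by
    rw [← Matrix.det_reindex_self finSumFinEquiv]
    rw [← hmin (fun i => Sum.elim e (fun _ : Fin 1 => p) (finSumFinEquiv.symm i))
      (fun i => Sum.elim e (fun _ : Fin 1 => q) (finSumFinEquiv.symm i))]
    congr 1
    refine Matrix.ext fun i j => ?_
    rw [Matrix.reindex_apply, Matrix.submatrix_apply, Matrix.of_apply]
    rcases finSumFinEquiv.symm i with a | a <;> rcases finSumFinEquiv.symm j with b | b <;> rfl
  rw [Matrix.det_fromBlocks₁₁] at h1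
  have h2 := (hdet.mul_right_eq_zero).mp h1
  rw [Matrix.det_fin_one, Matrix.sub_apply, sub_eq_zero] at h2
  have h3 : x p q = (Cc * ⅟X0 * Bb) 0 0 := h2
  rw [h3, Matrix.mul_apply]
  refine Finset.sum_congr rfl fun i _ => ?_
  rfl

end cramer

section hat
variable (m n : ℕ) (a : ℕ → Circle1)

def hatF (n i : ℕ) (h1 : 1 ≤ i) (h2 : i ≤ n) (k : Fin n) : Fin n :=
  if hk : (k : ℕ) < n - 1 then
    (if (k : ℕ) + 1 < i then k else ⟨k + 1, by omega⟩)
  else ⟨i - 1, by omega⟩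

lemma hatF_inj (n i : ℕ) (h1 : 1 ≤ i) (h2 : i ≤ n) : Function.Injective (hatF n i h1 h2) := by
  intro k l h
  have hk := k.2
  have hl := l.2
  unfold hatF at h
  ext
  split_ifs at h <;> simp [Fin.ext_iff] at h <;> omega

def hatP (n i : ℕ) (h1 : 1 ≤ i) (h2 : i ≤ n) : Equiv.Perm (Fin n) :=
  Equiv.ofBijective _ (Finite.injective_iff_bijective.mp (hatF_inj n i h1 h2))

variable {m n a}
lemma hat_row (hm : n < m) (i last : ℕ) (h1 : 1 ≤ i) (h2 : i ≤ n) (l1 : 1 ≤ last) (l2 : last ≤ m)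
    (k : Fin n) : hatRows m n a i last hm h2 l1 l2 k =
      Function.update (vTup m n a hm.le) ⟨i - 1, by omega⟩ (mkP m a last l1 l2) (hatP n i h1 h2 k) := by
  have hk := k.2
  have e : hatP n i h1 h2 k = hatF n i h1 h2 k := rfl
  rw [e]
  unfold hatF hatRows
  by_cases c1 : (k : ℕ) < n - 1
  · rw [dif_pos c1, dif_pos c1]
    by_cases c2 : (k : ℕ) + 1 < i
    · rw [if_pos c2, if_pos c2, Function.update_of_ne (by simp [Fin.ext_iff]; omega)]
      rfl
    · rw [if_neg c2, if_neg c2, Function.update_of_ne (by simp [Fin.ext_iff]; omega)]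
      rfl
  · rw [dif_neg c1, dif_neg c1, Function.update_self]

lemma hat_det {A : Type} [CommRing A] (f : ↥(a '' Set.Icc 1 m) → ↥(a '' Set.Icc 1 m) → A)
    (hm : n < m) (i last : ℕ) (h1 : 1 ≤ i) (h2 : i ≤ n) (l1 : 1 ≤ last) (l2 : last ≤ m)
    (E : Fin n → A) (hE : ∀ q, f (mkP m a last l1 l2) q = ∑ k, E k * f (vTup m n a hm.le k) q) :
    Matrix.det (Matrix.of fun k l => f (hatRows m n a i last hm h2 l1 l2 k) (vTup m n a hm.le l)) =
      ((Equiv.Perm.sign (hatP n i h1 h2) : ℤ) : A) * (E ⟨i - 1, by omega⟩ *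
        Matrix.det (Matrix.of fun k l => f (vTup m n a hm.le k) (vTup m n a hm.le l))) := by
  set X0 : Matrix (Fin n) (Fin n) A :=
    Matrix.of fun k l => f (vTup m n a hm.le k) (vTup m n a hm.le l) with hX0
  have e1 : (Matrix.of fun k l => f (hatRows m n a i last hm h2 l1 l2 k) (vTup m n a hm.le l)) =
      (X0.updateRow ⟨i - 1, by omega⟩ (∑ k, E k • X0 k)).submatrix (hatP n i h1 h2) id := by
    refine Matrix.ext fun k l => ?_
    rw [Matrix.of_apply, hat_row hm i last h1 h2, Matrix.submatrix_apply, Matrix.updateRow_apply,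
      Function.update_apply]
    split_ifs with h
    · rw [hE]; simp [hX0]
    · rfl
  rw [e1, Matrix.det_permute, Matrix.det_updateRow_sum]
  rfl

end hat
end Sft
end

section
open scoped Classical
open MvPolynomial

namespace Sft

section br
variable {K : Type} [Field K] {P : Set Circle1} {n : ℕ} {c1 c2 : K}

lemma mkD_add {σ M : Type} [AddCommGroup M] [Module K M] [Module (MvPolynomial σ K) M]
    [IsScalarTower K (MvPolynomial σ K) M]
    (f g : σ → M) (x : MvPolynomial σ K) :
    mkDerivation K (fun i => f i + g i) x = mkDerivation K f x + mkDerivation K g x := by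
  have : mkDerivation K (fun i => f i + g i) = mkDerivation K f + mkDerivation K g := by
    apply derivation_ext
    intro i; simp
  rw [this]; rfl

lemma swapBr_add_left (a b c : SwapRing K P) :
    swapBr K P c1 c2 (a + b) c = swapBr K P c1 c2 a c + swapBr K P c1 c2 b c := by
  unfold swapBr; rw [map_add]

lemma swapBr_add_right (a b c : SwapRing K P) :
    swapBr K P c1 c2 a (b + c) = swapBr K P c1 c2 a b + swapBr K P c1 c2 a c := by
  unfold swapBr
  rw [← mkD_add]
  congr 2
  funext g
  rw [map_add]

lemma swapBr_C_left (k : K) (c : SwapRing K P) : swapBr K P c1 c2 (C k) c = 0 := by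
  unfold swapBr; rw [derivation_C]

lemma swapBr_C_right (k : K) (c : SwapRing K P) : swapBr K P c1 c2 c (C k) = 0 := by
  unfold swapBr
  have : (fun g => (mkDerivation K (genBr K P c1 c2 g)) (C k)) = fun g : SwapIdx P => (0 : SwapRing K P) := by
    funext g; rw [derivation_C]
  rw [this]
  have h2 := mkD_add (fun g : SwapIdx P => (0 : SwapRing K P)) (fun g => 0) c
  simp only [add_zero] at h2
  exact left_eq_add.mp h2

variable {Q : Type} [CommRing Q] [Algebra K Q]

structure QB (t : SwapRing K P →+* Q) (c1 c2 : K) (Bq : Q → Q → Q) : Prop where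
  tC : ∀ k : K, t (C k) = algebraMap K Q k
  den1 : ∀ x : Q, ∃ s b : SwapRing K P, IsUnit (t s) ∧ t s * x = t b
  h0 : ∀ a b : SwapRing K P, Bq (t a) (t b) = t (swapBr K P c1 c2 a b)
  h1 : ∀ a b c : Q, Bq (a * b) c = a * Bq b c + b * Bq a c
  h2 : ∀ a b c : Q, Bq a (b * c) = b * Bq a c + c * Bq a b

variable {t : SwapRing K P →+* Q} {Bq : Q → Q → Q}

lemma den2 (hB : QB t c1 c2 Bq) (x y : Q) : ∃ s a b : SwapRing K P, IsUnit (t s) ∧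
    t s * x = t a ∧ t s * y = t b := by
  obtain ⟨s, a, hs, ha⟩ := hB.den1 x
  obtain ⟨t, b, ht, hb⟩ := hB.den1 y
  refine ⟨s * t, t * a, s * b, ?_, ?_, ?_⟩
  · rw [map_mul]; exact hs.mul ht
  · rw [map_mul, map_mul, ← ha]; ring
  · rw [map_mul, map_mul, ← hb]; ring

lemma addL0 (hB : QB t c1 c2 Bq) (x y : Q) (w : SwapRing K P) :
    Bq (x + y) (t w) = Bq x (t w) + Bq y (t w) := by
  have h0 := hB.h0
  have h1 := hB.h1
  have h2 := hB.h2
  obtain ⟨s, a, b, hs, ha, hb⟩ := den2 hB x y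
  have e1 := h1 (t s) (x + y) (t w)
  have e2 := h1 (t s) x (t w)
  have e3 := h1 (t s) y (t w)
  rw [mul_add, ha, hb, ← map_add, h0, swapBr_add_left, map_add, ← h0, ← h0, ← ha, ← hb, e2, e3] at e1
  apply hs.mul_left_cancel
  linear_combination -e1

lemma addR0 (hB : QB t c1 c2 Bq) (x y : Q) (w : SwapRing K P) :
    Bq (t w) (x + y) = Bq (t w) x + Bq (t w) y := by
  have h0 := hB.h0
  have h1 := hB.h1
  have h2 := hB.h2
  obtain ⟨s, a, b, hs, ha, hb⟩ := den2 hB x y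
  have e1 := h2 (t w) (t s) (x + y)
  have e2 := h2 (t w) (t s) x
  have e3 := h2 (t w) (t s) y
  rw [mul_add, ha, hb, ← map_add, h0, swapBr_add_right, map_add, ← h0, ← h0, ← ha, ← hb, e2, e3] at e1
  apply hs.mul_left_cancel
  linear_combination -e1

lemma addL (hB : QB t c1 c2 Bq) (x y w : Q) :
    Bq (x + y) w = Bq x w + Bq y w := by
  obtain ⟨s, c, hs, hc⟩ := hB.den1 w
  have h2 := hB.h2
  have e1 := h2 (x + y) (t s) w
  have e2 := h2 x (t s) w
  have e3 := h2 y (t s) w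
  rw [hc, addL0 hB, addL0 hB, ← hc, e2, e3] at e1
  apply hs.mul_left_cancel
  linear_combination -e1

lemma addR (hB : QB t c1 c2 Bq) (w x y : Q) :
    Bq w (x + y) = Bq w x + Bq w y := by
  obtain ⟨s, c, hs, hc⟩ := hB.den1 w
  have h1 := hB.h1
  have e1 := h1 (t s) w (x + y)
  have e2 := h1 (t s) w x
  have e3 := h1 (t s) w y
  rw [hc, addR0 hB, addR0 hB, ← hc, e2, e3] at e1
  apply hs.mul_left_cancel
  linear_combination -e1

lemma CL (hB : QB t c1 c2 Bq) (k : K) (w : Q) :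
    Bq (algebraMap K _ k) w = 0 := by
  obtain ⟨s, c, hs, hc⟩ := hB.den1 w
  have h0 := hB.h0
  have h1 := hB.h1
  have h2 := hB.h2
  have e1 := h2 (t (C k)) (t s) w
  rw [hc, h0, h0, swapBr_C_left, swapBr_C_left, map_zero, mul_zero, add_zero, hB.tC] at e1
  exact hs.mul_right_eq_zero.mp e1.symm

lemma CR (hB : QB t c1 c2 Bq) (k : K) (w : Q) :
    Bq w (algebraMap K _ k) = 0 := by
  obtain ⟨s, c, hs, hc⟩ := hB.den1 w
  have h0 := hB.h0
  have h1 := hB.h1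
  have h2 := hB.h2
  have e1 := h1 (t s) w (t (C k))
  rw [hc, h0, h0, swapBr_C_right, swapBr_C_right, map_zero, mul_zero, add_zero, hB.tC] at e1
  exact hs.mul_right_eq_zero.mp e1.symm

lemma bx (hB : QB t c1 c2 Bq) (o : Circle1) [CharZero K] (r q s q' : ↥P) :
    Bq (t (gen K P r q)) (t (gen K P s q')) =
      algebraMap K _ (1/2) * (algebraMap K _ (sg o r q' : ℚ) + algebraMap K _ (sg o q' q : ℚ)
        - algebraMap K _ (sg o r s : ℚ) - algebraMap K _ (sg o s q : ℚ)) *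
      (algebraMap K _ c1 * (t (gen K P r q') * t (gen K P s q)) +
       algebraMap K _ c2 * (t (gen K P r q) * t (gen K P s q'))) := by
  by_cases h1 : r = q
  · subst h1
    have : gen K P r r = C 0 := by simp [gen]
    rw [this, hB.tC, CL hB, sg_anti o q' r, sg_anti o r s]
    push_cast [map_neg]
    ring
  by_cases h2 : s = q'
  · subst h2
    have : gen K P s s = C 0 := by simp [gen]
    rw [this, hB.tC, CR hB]
    ring
  have g1 : gen K P r q = X ⟨(r, q), h1⟩ := by rw [gen, dif_pos h1]
  have g2 : gen K P s q' = X ⟨(s, q'), h2⟩ := by rw [gen, dif_pos h2]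
  rw [g1, g2, hB.h0, swapBr, mkDerivation_X, mkDerivation_X, genBr]
  simp only
  rw [smul_eq_C_mul, smul_eq_C_mul, smul_eq_C_mul, linkQ_eq o, ← g1, ← g2]
  simp only [map_mul, map_add, hB.tC]
  have : ((1 / 2 * (sg o ↑r ↑q' + sg o ↑q' ↑q - sg o ↑r ↑s - sg o ↑s ↑q) : ℚ) : K)
     = (1/2 : K) * ((sg o r q' : ℚ) + (sg o q' q : ℚ) - (sg o r s : ℚ) - (sg o s q : ℚ)) := by
    push_cast; rfl
  rw [this]
  simp only [map_mul, map_add, map_sub]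

end br
end Sft
end

section
open scoped Classical
open MvPolynomial

namespace Sft

section fin
variable {K : Type} [Field K] [CharZero K] {m n : ℕ} {a : ℕ → Circle1}
variable {Q : Type} [CommRing Q] [Algebra K Q] {t : SwapRing K (a '' Set.Icc 1 m) →+* Q}

lemma g_le (g : GIdx m n) : 1 ≤ g.1.2 := Nat.one_le_of_lt g.2.2.2.1

lemma sgn_sq {A : Type} [CommRing A] (s : Equiv.Perm (Fin n)) :
    ((Equiv.Perm.sign s : ℤ) : A) * ((Equiv.Perm.sign s : ℤ) : A) = 1 := by
  rw [← Int.cast_mul, Int.units_coe_mul_self, Int.cast_one]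

lemma hat_same {A : Type} [CommRing A] (f : ↥(a '' Set.Icc 1 m) → ↥(a '' Set.Icc 1 m) → A)
    (hm : n < m) (i : ℕ) (h1 : 1 ≤ i) (h2 : i ≤ n) (l2 : i ≤ m) :
    Matrix.det (Matrix.of fun k l => f (hatRows m n a i i hm h2 h1 l2 k) (vTup m n a hm.le l)) =
      ((Equiv.Perm.sign (hatP n i h1 h2) : ℤ) : A) *
        Matrix.det (Matrix.of fun k l => f (vTup m n a hm.le k) (vTup m n a hm.le l)) := by
  have e : mkP m a i h1 l2 = vTup m n a hm.le ⟨i - 1, by omega⟩ := by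
    unfold vTup mkP
    congr
    simp only; omega
  rw [hat_det f hm i i h1 h2 h1 l2 (Pi.single ⟨i - 1, by omega⟩ 1)]
  · simp
  · intro q
    rw [e]
    simp [Pi.single_apply]

lemma theta1 (hm : n < m) (θ : MvPolynomial (GIdx m n) K →ₐ[K] Q)
    (hθ : ∀ g : GIdx m n,
      θ (X g) * t (Dmat K (a '' Set.Icc 1 m) n
                  (hatRows m n a g.1.1 g.1.1 hm g.2.2.1 g.2.1 (le_trans g.2.2.1 hm.le))
                  (vTup m n a hm.le))
        = t (Dmat K (a '' Set.Icc 1 m) n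
                (hatRows m n a g.1.1 g.1.2 hm g.2.2.1 (g_le g)
                  g.2.2.2.2)
                (vTup m n a hm.le))) (g : GIdx m n) :
    θ (X g) * t (Dmat K (a '' Set.Icc 1 m) n (vTup m n a hm.le) (vTup m n a hm.le)) =
      ((Equiv.Perm.sign (hatP n g.1.1 g.2.1 g.2.2.1) : ℤ) : Q) *
       t (Dmat K (a '' Set.Icc 1 m) n
                (hatRows m n a g.1.1 g.1.2 hm g.2.2.1 (g_le g)
                  g.2.2.2.2)
                (vTup m n a hm.le)) := by
  rw [← hθ g, map_Dmat, map_Dmat,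
    hat_same (fun p q => t (gen K (a '' Set.Icc 1 m) p q)) hm g.1.1 g.2.1 g.2.2.1]
  have := sgn_sq (A := Q) (hatP n g.1.1 g.2.1 g.2.2.1)
  linear_combination (-θ (X g) * Matrix.det (Matrix.of fun k l => t (gen K (a '' Set.Icc 1 m) (vTup m n a hm.le k) (vTup m n a hm.le l)))) * this

lemma a_inj (hcfg : AnticlockwiseList ((List.range m).map (fun k => a (k+1))))
    {k l : ℕ} (hk : 1 ≤ k) (hk' : k ≤ m) (hl : 1 ≤ l) (hl' : l ≤ m) (h : a k = a l) : k = l := by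
  obtain ⟨o, ho⟩ := cfg hcfg
  have h1 := ho k l hk hk' hl hl'
  have h2 := ho l l hl hl' hl hl'
  rw [h, h2] at h1
  unfold sI at h1
  by_contra hne
  rcases lt_or_gt_of_ne hne with h | h
  · simp [h] at h1
  · simp [h.not_gt, hne] at h1

lemma vTup_inj (hcfg : AnticlockwiseList ((List.range m).map (fun k => a (k+1)))) (hm : n ≤ m) :
    Function.Injective (vTup m n a hm) := by
  intro k l h
  have := a_inj hcfg (by omega) (by omega) (by omega) (by omega) (congrArg Subtype.val h)
  ext; omega

lemma exists_phi (hn : 2 ≤ n) (hm : n < m)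
    (hcfg : AnticlockwiseList ((List.range m).map (fun k => a (k+1)))) :
    ∃ φ : SwapRing K (a '' Set.Icc 1 m) →ₐ[K] MvPolynomial (GIdx m n) K,
      (∀ z ∈ Rideal K (a '' Set.Icc 1 m) n, φ z = 0) ∧
      IsUnit (φ (Dmat K (a '' Set.Icc 1 m) n (vTup m n a hm.le) (vTup m n a hm.le))) ∧
      ∀ g : GIdx m n, φ (Dmat K (a '' Set.Icc 1 m) n
                (hatRows m n a g.1.1 g.1.2 hm g.2.2.1 (g_le g)
                  g.2.2.2.2)
                (vTup m n a hm.le)) =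
         ((Equiv.Perm.sign (hatP n g.1.1 g.2.1 g.2.2.1) : ℤ) : MvPolynomial (GIdx m n) K) *
        (X g * φ (Dmat K (a '' Set.Icc 1 m) n (vTup m n a hm.le) (vTup m n a hm.le))) := by
  have hr := vTup_inj hcfg hm.le
  set r := vTup m n a hm.le with hrdef
  have hex : ∀ p : ↥(a '' Set.Icc 1 m), ∃ k, ∃ h1 : 1 ≤ k, ∃ h2 : k ≤ m, mkP m a k h1 h2 = p := by
    rintro ⟨p, k, hk, rfl⟩
    exact ⟨k, hk.1, hk.2, rfl⟩
  choose idx i1 i2 hidx using hex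
  have idx_mk : ∀ k h1 h2, idx (mkP m a k h1 h2) = k := fun k h1 h2 =>
    a_inj hcfg (i1 _) (i2 _) h1 h2 (congrArg Subtype.val (hidx (mkP m a k h1 h2)))
  have idx_r : ∀ i, idx (r i) = i + 1 := fun i => idx_mk _ _ _
  let w : ↥(a '' Set.Icc 1 m) → Fin n → MvPolynomial (GIdx m n) K := fun p i =>
    if h : idx p ≤ n then (if r i = p then 1 else 0)
      else X ⟨((i : ℕ) + 1, idx p), by omega, i.2, by omega, i2 p⟩
  let u : ↥(a '' Set.Icc 1 m) → Fin n → MvPolynomial (GIdx m n) K := fun q i =>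
    if q = r (finRotate n i) then 1 else 0
  obtain ⟨φ, hφ⟩ := exists_hom (K := K) (fun p q => ∑ i, w p i * u q i) (by
    intro p
    apply Finset.sum_eq_zero
    intro i _
    by_cases hu : p = r (finRotate n i)
    · have : w p i = 0 := by
        have h1 : idx p ≤ n := by rw [hu, idx_r]; exact (finRotate n i).2
        simp only [w]
        rw [dif_pos h1, if_neg]
        rw [hu]
        intro h
        exact rot_ne hn i (hr h).symm
      rw [this, zero_mul]
    · simp only [u]
      rw [if_neg hu, mul_zero])
  have w_r : ∀ k i, w (r k) i = if i = k then 1 else 0 := by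
    intro k i
    have h1 : idx (r k) ≤ n := by rw [idx_r]; exact k.2
    simp only [w]
    rw [dif_pos h1]
    simp [hr.eq_iff]
  have φ_r : ∀ k q, φ (gen K (a '' Set.Icc 1 m) (r k) q) = u q k := by
    intro k q
    rw [hφ]
    simp [w_r]
  have hE : ∀ p q, φ (gen K (a '' Set.Icc 1 m) p q) = ∑ i, w p i * φ (gen K (a '' Set.Icc 1 m) (r i) q) := by
    intro p q
    rw [hφ]
    simp only [φ_r]
  refine ⟨φ, ?_, ?_, ?_⟩
  · have : Rideal K (a '' Set.Icc 1 m) n ≤ RingHom.ker φ.toRingHom := by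
      rw [Rideal, Ideal.span_le]
      rintro z ⟨xs, ys, rfl⟩
      rw [SetLike.mem_coe, RingHom.mem_ker, map_Dmat]
      have : (Matrix.of fun i j => φ.toRingHom (gen K (a '' Set.Icc 1 m) (xs i) (ys j))) =
        (Matrix.of fun i k => w (xs i) k) * (Matrix.of fun k j => u (ys j) k) := by
        ext1 i j
        rw [Matrix.mul_apply]
        exact hφ _ _
      rw [this]
      exact det_mul_small _ _
    intro z hz
    exact this hz
  · have := map_Dmat φ.toRingHom n r r
    have e2 : (Matrix.of fun i j => φ.toRingHom (gen K (a '' Set.Icc 1 m) (r i) (r j)))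
      = (Matrix.of fun i j => if r j = r (finRotate n i) then (1 : MvPolynomial (GIdx m n) K) else 0) := by
      ext1 i j
      exact φ_r _ _
    rw [e2] at this
    change IsUnit (φ.toRingHom _)
    rw [this]
    exact det_rot r hr _
  · intro g
    have h1 := hat_det (a := a) (fun p q => φ.toRingHom (gen K (a '' Set.Icc 1 m) p q)) hm g.1.1 g.1.2 g.2.1 g.2.2.1
      (g_le g) g.2.2.2.2 (w (mkP m a g.1.2 (g_le g) g.2.2.2.2)) (fun q => hE _ q)
    have e : w (mkP m a g.1.2 (g_le g) g.2.2.2.2) ⟨g.1.1 - 1, by have := g.2.1; have := g.2.2.1; omega⟩ = X g := by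
      simp only [w]
      rw [dif_neg (by rw [idx_mk]; have := g.2.2.2.1; omega)]
      congr 1
      apply Subtype.ext
      apply Prod.ext
      · have := g.2.1
        simp only; omega
      · exact idx_mk _ _ _
    rw [e, ← map_Dmat, ← map_Dmat] at h1
    exact h1

lemma inj_core (hn : 2 ≤ n) (hm : n < m)
    (hcfg : AnticlockwiseList ((List.range m).map (fun k => a (k+1))))
    (hker : ∀ z, t z = 0 → z ∈ Rideal K (a '' Set.Icc 1 m) n)
    (tC : ∀ k : K, t (C k) = algebraMap K Q k)
    (θ : MvPolynomial (GIdx m n) K →ₐ[K] Q)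
    (hθ : ∀ g : GIdx m n,
      θ (X g) * t (Dmat K (a '' Set.Icc 1 m) n
                  (hatRows m n a g.1.1 g.1.1 hm g.2.2.1 g.2.1 (le_trans g.2.2.1 hm.le))
                  (vTup m n a hm.le))
        = t (Dmat K (a '' Set.Icc 1 m) n
                (hatRows m n a g.1.1 g.1.2 hm g.2.2.1 (g_le g)
                  g.2.2.2.2)
                (vTup m n a hm.le))) : Function.Injective θ := by
  obtain ⟨φ, h0, hu, hX⟩ := exists_phi (K := K) hn hm hcfg
  have hT := theta1 hm θ hθ
  set D := Dmat K (a '' Set.Icc 1 m) n (vTup m n a hm.le) (vTup m n a hm.le) with hD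
  have key : ∀ f, ∃ N : ℕ, ∃ z, θ f * t D ^ N = t z ∧ φ z = φ D ^ N * f := by
    intro f
    induction f using MvPolynomial.induction_on with
    | C k =>
      refine ⟨0, C k, ?_, ?_⟩
      · rw [tC, pow_zero, mul_one]; exact θ.commutes k
      · rw [pow_zero, one_mul]; exact φ.commutes k
    | add f g hf hg =>
      obtain ⟨N, z, e1, e2⟩ := hf
      obtain ⟨N', z', e1', e2'⟩ := hg
      refine ⟨N + N', z * D ^ N' + z' * D ^ N, ?_, ?_⟩
      · simp only [map_add, map_mul, map_pow, ← e1, ← e1']; ring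
      · simp only [map_add, map_mul, map_pow, e2, e2']; ring
    | mul_X f g hf =>
      obtain ⟨N, z, e1, e2⟩ := hf
      have s1 := hT g
      have s2 := hX g
      have sq := sgn_sq (A := MvPolynomial (GIdx m n) K) (hatP n g.1.1 g.2.1 g.2.2.1)
      refine ⟨N + 1, z * (((Equiv.Perm.sign (hatP n g.1.1 g.2.1 g.2.2.1) : ℤ) : SwapRing K (a '' Set.Icc 1 m)) * Dmat K (a '' Set.Icc 1 m) n
                (hatRows m n a g.1.1 g.1.2 hm g.2.2.1 (g_le g)
                  g.2.2.2.2)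
                (vTup m n a hm.le)), ?_, ?_⟩
      · rw [map_mul t, map_mul t, map_intCast, ← s1, ← e1, map_mul]; ring
      · rw [map_mul φ, map_mul φ, map_intCast, s2, e2]
        linear_combination (φ D ^ (N+1) * f * X g) * sq
  rw [injective_iff_map_eq_zero]
  intro f hf
  obtain ⟨N, z, e1, e2⟩ := key f
  rw [hf, zero_mul] at e1
  rw [h0 z (hker z e1.symm)] at e2
  exact ((hu.pow N).mul_right_eq_zero).mp e2.symm

lemma poi_gen {al be : K} (hm : n < m)
    (hcfg : AnticlockwiseList ((List.range m).map (fun k => a (k+1))))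
    (hmin : ∀ z ∈ Rideal K (a '' Set.Icc 1 m) n, t z = 0)
    (hdet : IsUnit (t (Dmat K (a '' Set.Icc 1 m) n (vTup m n a hm.le) (vTup m n a hm.le))))
    (θ : MvPolynomial (GIdx m n) K →ₐ[K] Q)
    (hθ : ∀ g : GIdx m n,
      θ (X g) * t (Dmat K (a '' Set.Icc 1 m) n
                  (hatRows m n a g.1.1 g.1.1 hm g.2.2.1 g.2.1 (le_trans g.2.2.1 hm.le))
                  (vTup m n a hm.le))
        = t (Dmat K (a '' Set.Icc 1 m) n
                (hatRows m n a g.1.1 g.1.2 hm g.2.2.1 (g_le g)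
                  g.2.2.2.2)
                (vTup m n a hm.le)))
    (Bq : Q → Q → Q) (hB : QB t (be - al) (al + be) Bq) (g g' : GIdx m n) :
    θ (genG K m n al be a g g') = Bq (θ (X g)) (θ (X g')) := by
  obtain ⟨o, ho⟩ := cfg hcfg
  have hT := theta1 hm θ hθ
  have hd2 : IsUnit (Matrix.det (Matrix.of fun i j => t (gen K (a '' Set.Icc 1 m) (vTup m n a hm.le i) (vTup m n a hm.le j)))) := by
    rw [← map_Dmat]; exact hdet
  obtain ⟨E, hE⟩ := cramer (fun p q => t (gen K (a '' Set.Icc 1 m) p q)) (fun xs ys => by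
    rw [← map_Dmat t]
    exact hmin _ (Ideal.subset_span ⟨xs, ys, rfl⟩)) (vTup m n a hm.le) hd2
  have hθE : ∀ g : GIdx m n, θ (X g) = E ⟨g.1.1 - 1, by have := g.2.1; have := g.2.2.1; omega⟩
      (mkP m a g.1.2 (g_le g) g.2.2.2.2) := by
    intro g
    apply hdet.mul_right_cancel
    rw [hT g, map_Dmat, map_Dmat, hat_det (a := a) (fun p q => t (gen K (a '' Set.Icc 1 m) p q)) hm g.1.1 g.1.2 g.2.1 g.2.2.1
      (g_le g) g.2.2.2.2 (fun i => E i (mkP m a g.1.2 (g_le g) g.2.2.2.2)) (fun q => hE _ q),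
      ← mul_assoc, sgn_sq, one_mul]
  obtain ⟨⟨i, j⟩, hi1, hi2, hj1, hj2⟩ := g
  obtain ⟨⟨i', j'⟩, hi1', hi2', hj1', hj2'⟩ := g'
  simp only at hi1 hi2 hj1 hj2 hi1' hi2' hj1' hj2'
  have hc := comp (fun p q => t (gen K (a '' Set.Icc 1 m) p q)) (fun p q => algebraMap K Q ((sg o p q : ℚ) : K))
    (algebraMap K Q (1/2)) (algebraMap K Q (be - al)) (algebraMap K Q (al + be)) Bq (addL hB) (addR hB) hB.h1 hB.h2
    (bx hB o) (vTup m n a hm.le) E hE hd2 (mkP m a j (by omega) hj2) (mkP m a j' (by omega) hj2')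
    (by
      intro i
      have : sg o (a j) (a (i+1)) = 1 := by
        rw [ho _ _ (by omega) (by omega) (by omega) (by omega), sI, if_neg (by omega), if_neg (by omega)]
      show algebraMap K Q ((sg o (a j) (a (i+1)) : ℚ) : K) = 1
      rw [this]; simp)
    (by
      intro i
      have : sg o (a (i+1)) (a j') = -1 := by
        rw [ho _ _ (by omega) (by omega) (by omega) (by omega), sI, if_pos (by omega)]
      show algebraMap K Q ((sg o (a (i+1)) (a j') : ℚ) : K) = -1
      rw [this]; simp) ⟨i - 1, by omega⟩ ⟨i' - 1, by omega⟩
  have f1 : sg o (mkP m a j (by omega) hj2) (mkP m a j' (by omega) hj2') = sI j j' :=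
    ho _ _ (by omega) (by omega) (by omega) (by omega)
  have f2 : ∀ k l (hk : 1 ≤ k) (hk' : k ≤ n) (hl : 1 ≤ l) (hl' : l ≤ n),
     sg o (vTup m n a hm.le ⟨k - 1, by omega⟩) (vTup m n a hm.le ⟨l - 1, by omega⟩) = sI k l := by
    intro k l hk hk' hl hl'
    have := ho k l (by omega) (by omega) (by omega) (by omega)
    rw [← this]
    show sg o (a (k - 1 + 1)) (a (l - 1 + 1)) = _
    rw [Nat.sub_add_cancel hk, Nat.sub_add_cancel hl]
  simp only [f1] at hc
  rw [f2 i' i hi1' hi2' hi1 hi2, f2 i i' hi1 hi2 hi1' hi2'] at hc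
  have anti : ∀ k l, sI k l = - sI l k := by
    intro k l
    unfold sI
    split_ifs <;> first | (exfalso; omega) | norm_num
  have hl : linkQ (a i) (a j) (a i') (a j') = -(1/2) * (sI j j' + sI i i') := by
    rw [linkQ_eq o, ho, ho, ho, ho, anti j' j]
    · have e1 : sI i j' = -1 := by rw [sI, if_pos (by omega)]
      have e2 : sI i' j = -1 := by rw [sI, if_pos (by omega)]
      rw [e1, e2]; ring
    all_goals omega
  unfold genG
  simp only
  rw [hl, sEq_eq, map_add, map_smul, map_smul, map_mul, map_mul, hθE, hθE, hθE, hθE, Algebra.smul_def, Algebra.smul_def]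
  have g1 : (((1/2) * (sI j j' + sI i' i) : ℚ) : K) = (1/2) * ((sI j j' : ℚ) + (sI i' i : ℚ)) := by
    push_cast; rfl
  have g2 : ((-(1/2) * (sI j j' + sI i i') : ℚ) : K) = -(1/2) * ((sI j j' : ℚ) + (sI i i' : ℚ)) := by
    push_cast; rfl
  rw [g1, g2]
  simp only [map_mul, map_add, map_sub, map_neg] at hc ⊢
  linear_combination -hc

lemma poi {al be : K} (hm : n < m)
    (θ : MvPolynomial (GIdx m n) K →ₐ[K] Q)
    (Bq : Q → Q → Q) (hB : QB t (be - al) (al + be) Bq)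
    (hg : ∀ g g' : GIdx m n, θ (genG K m n al be a g g') = Bq (θ (X g)) (θ (X g')))
    (f h : MvPolynomial (GIdx m n) K) :
    θ (brG K m n al be a f h) = Bq (θ f) (θ h) := by
  have key : ∀ g (h : MvPolynomial (GIdx m n) K),
     θ (mkDerivation K (genG K m n al be a g) h) = Bq (θ (X g)) (θ h) := by
    intro g h
    induction h using MvPolynomial.induction_on with
    | C k =>
      rw [derivation_C, map_zero]
      have : θ (C k) = algebraMap K Q k := θ.commutes k
      rw [this, CR hB]
    | add p q hp hq => rw [map_add, map_add, map_add, addR hB, hp, hq]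
    | mul_X p i hp =>
      rw [Derivation.leibniz, mkDerivation_X, map_mul, hB.h2, ← hp, ← hg, map_add, smul_eq_mul, smul_eq_mul,
        map_mul, map_mul]
  unfold brG
  induction f using MvPolynomial.induction_on with
    | C k =>
      rw [derivation_C, map_zero]
      have : θ (C k) = algebraMap K Q k := θ.commutes k
      rw [this, CL hB]
    | add p q hp hq => rw [map_add, map_add, map_add, addL hB, hp, hq]
    | mul_X p i hp =>
      rw [Derivation.leibniz, mkDerivation_X, map_mul, hB.h1, ← hp, ← key, map_add, smul_eq_mul, smul_eq_mul,
        map_mul, map_mul]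

lemma toQn_C {P : Set Circle1} (k : K) : toQn K P n (C k) = algebraMap K (QnRing K P n) k := by
  rw [IsScalarTower.algebraMap_apply K (ZnRing K P n) (QnRing K P n)]
  rfl

end fin
end Sft
end


namespace Sft
lemma comm_aux {R Q : Type} [CommRing R] [CommRing Q] (t : R →+* Q) (x : Q) (s b : R)
    (h : x * t s = t b) : t s * x = t b := by rw [mul_comm]; exact h

lemma den1 {K : Type} [Field K] {P : Set Circle1} {n : ℕ} (x : QnRing K P n) :
    ∃ s b : SwapRing K P, IsUnit (toQn K P n s) ∧ toQn K P n s * x = toQn K P n b := by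
  obtain ⟨⟨b, s⟩, h⟩ := IsLocalization.surj (nonZeroDivisors (ZnRing K P n)) x
  obtain ⟨b', hb⟩ := Ideal.Quotient.mk_surjective b
  obtain ⟨s', hs⟩ := Ideal.Quotient.mk_surjective (s : ZnRing K P n)
  have e : toQn K P n s' = algebraMap _ _ (s : ZnRing K P n) := by rw [← hs]; rfl
  refine ⟨s', b', ?_, ?_⟩
  · rw [e]; exact IsLocalization.map_units (QnRing K P n) s
  · have h' : x * toQn K P n s' = toQn K P n b' := by
      rw [e]
      have e2 : toQn K P n b' = algebraMap _ _ b := by rw [← hb]; rfl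
      rw [e2]
      exact h
    exact comm_aux (toQn K P n) x s' b' h'
end Sft

/-- Let `α, β ∈ K`, `m > n ≥ 2` and let `P = {a_1, …, a_m}` be ordered
anticlockwise on a circle; equip `Q_n(P)` with the `(β-α, α+β)`-swapping bracket.  The
algebra homomorphism `θ : K[m_{ij} : 1 ≤ i ≤ n < j ≤ m] → Q_n(P)` sending `m_{ij}` to the
determinant quotient `E(a_1, …, a_{i-1}, a_{i+1}, …, a_n | a_j, a_i)` (characterized by
`θ(m_{ij}) · Δ((â_i, a_i), v) = Δ((â_i, a_j), v)`) is injective and Poisson with respect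
to `{·,·}_{B_{α,β}}` and the `(β-α, α+β)`-swapping bracket. -/
theorem grassmannian_bracket_to_swapping (K : Type) [Field K] [CharZero K]
    (al be : K) (m n : ℕ) (hn : 2 ≤ n) (hm : n < m) (a : ℕ → Circle1)
    (hcfg : AnticlockwiseList ((List.range m).map (fun k => a (k+1))))
    (θ : MvPolynomial (GIdx m n) K →ₐ[K] QnRing K (a '' Set.Icc 1 m) n)
    (hθ : ∀ g : GIdx m n,
      θ (MvPolynomial.X g)
          * algebraMap (ZnRing K (a '' Set.Icc 1 m) n) (QnRing K (a '' Set.Icc 1 m) n)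
              (toZn K (a '' Set.Icc 1 m) n
                (Dmat K (a '' Set.Icc 1 m) n
                  (hatRows m n a g.1.1 g.1.1 hm g.2.2.1 g.2.1 (le_trans g.2.2.1 hm.le))
                  (vTup m n a hm.le)))
        = algebraMap (ZnRing K (a '' Set.Icc 1 m) n) (QnRing K (a '' Set.Icc 1 m) n)
            (toZn K (a '' Set.Icc 1 m) n
              (Dmat K (a '' Set.Icc 1 m) n
                (hatRows m n a g.1.1 g.1.2 hm g.2.2.1 (by have := g.2.2.2.1; omega)
                  g.2.2.2.2)
                (vTup m n a hm.le)))) :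
    Function.Injective θ ∧
    ∀ Bq : QnRing K (a '' Set.Icc 1 m) n → QnRing K (a '' Set.Icc 1 m) n →
          QnRing K (a '' Set.Icc 1 m) n,
      IsQnBracket K (a '' Set.Icc 1 m) n (be - al) (al + be) Bq →
      ∀ f g : MvPolynomial (GIdx m n) K,
        θ (brG K m n al be a f g) = Bq (θ f) (θ g) := by
  have hr := Sft.vTup_inj (n := n) hcfg hm.le
  haveI : Finite ↥(a '' Set.Icc 1 m) := ((Set.finite_Icc 1 m).image a).to_subtype
  haveI : Fintype ↥(a '' Set.Icc 1 m) := Fintype.ofFinite _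
  have hnz : toZn K (a '' Set.Icc 1 m) n (Dmat K (a '' Set.Icc 1 m) n (vTup m n a hm.le) (vTup m n a hm.le))
      ∈ nonZeroDivisors (ZnRing K (a '' Set.Icc 1 m) n) := by
    rw [mem_nonZeroDivisors_iff_right]
    intro z hz
    obtain ⟨z, rfl⟩ := Ideal.Quotient.mk_surjective z
    rw [toZn, ← map_mul, Ideal.Quotient.eq_zero_iff_mem] at hz
    exact Ideal.Quotient.eq_zero_iff_mem.mpr (Sft.nzd hn _ hr z hz)
  have hu : IsUnit (toQn K (a '' Set.Icc 1 m) n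
      (Dmat K (a '' Set.Icc 1 m) n (vTup m n a hm.le) (vTup m n a hm.le))) :=
    IsLocalization.map_units (QnRing K (a '' Set.Icc 1 m) n)
      (⟨_, hnz⟩ : nonZeroDivisors (ZnRing K (a '' Set.Icc 1 m) n))
  have hker : ∀ z, toQn K (a '' Set.Icc 1 m) n z = 0 → z ∈ Rideal K (a '' Set.Icc 1 m) n := by
    intro z hz
    have hi : Function.Injective (algebraMap (ZnRing K (a '' Set.Icc 1 m) n) (QnRing K (a '' Set.Icc 1 m) n)) :=
      IsLocalization.injective (M := nonZeroDivisors (ZnRing K (a '' Set.Icc 1 m) n))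
        (QnRing K (a '' Set.Icc 1 m) n) le_rfl
    exact Ideal.Quotient.eq_zero_iff_mem.mp ((injective_iff_map_eq_zero _).mp hi _ hz)
  have hmin : ∀ z ∈ Rideal K (a '' Set.Icc 1 m) n, toQn K (a '' Set.Icc 1 m) n z = 0 := by
    intro z hz
    have h0 : toZn K (a '' Set.Icc 1 m) n z = 0 := Ideal.Quotient.eq_zero_iff_mem.mpr hz
    rw [toQn, RingHom.comp_apply, h0, map_zero]
  have hinj := Sft.inj_core (Q := QnRing K (a '' Set.Icc 1 m) n)
    (t := toQn K (a '' Set.Icc 1 m) n) hn hm hcfg hker Sft.toQn_C θ hθ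
  refine ⟨hinj, ?_⟩
  intro Bq hB f g
  have hQB : Sft.QB (toQn K (a '' Set.Icc 1 m) n) (be - al) (al + be) Bq :=
    ⟨Sft.toQn_C, Sft.den1, hB.1, hB.2.1, hB.2.2⟩
  exact Sft.poi hm θ Bq hQB (Sft.poi_gen hm hcfg hmin hu θ hθ Bq hQB) f g

end
end

section
/- Let n ≥ 2 and let Ω be a nonzero alternating n-form on K^n. Suppose (x_1,…,x_n) and (x'_1,…,x'_n) are bases of K^n spanning the same complete flag, in the sense that x'_1 ∧ … ∧ x'_k = λ_k · (x_1 ∧ … ∧ x_k) for some nonzero scalars λ_k ∈ K, for every k = 1, …, n, and similarly for the pairs (y_i)/(y'_i), (z_i)/(z'_i), and (t_i)/(t'_i). Then the (m,l,p)-triple ratio T^{m,l,p} and the (i,n−i)-edge function B_i computed from the primed bases are equal to those computed from the unprimed bases (whenever all the values of Ω appearing in the denominators are nonzero); that is, the triple ratios and edge functions depend only on the flags and not on the chosen bases. -/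
noncomputable section

/-- The `(m,l,p)`-triple ratio (with `p = n - m - l`):
`T^{m,l,p} = [Ω(x̂^{m+1} ∧ ŷ^l ∧ ẑ^{p-1}) · Ω(x̂^{m-1} ∧ ŷ^{l+1} ∧ ẑ^p) ·
Ω(x̂^m ∧ ŷ^{l-1} ∧ ẑ^{p+1})] / [Ω(x̂^{m+1} ∧ ŷ^{l-1} ∧ ẑ^p) ·
Ω(x̂^m ∧ ŷ^{l+1} ∧ ẑ^{p-1}) · Ω(x̂^{m-1} ∧ ŷ^l ∧ ẑ^{p+1})]`. -/
def tripleRatio (K : Type) [Field K] (n : ℕ)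
    (Om : AlternatingMap K (Fin n → K) K (Fin n)) (x y z : ℕ → (Fin n → K))
    (m l : ℕ) : K :=
  (Om (rows3 x y z (m+1) l) * Om (rows3 x y z (m-1) (l+1)) * Om (rows3 x y z m (l-1)))
    / (Om (rows3 x y z (m+1) (l-1)) * Om (rows3 x y z m (l+1)) * Om (rows3 x y z (m-1) l))

/-- The `(i, n-i)`-edge function:
`B_i = [Ω(x̂^i ∧ ẑ^{n-i-1} ∧ t_1) · Ω(x̂^{i-1} ∧ ẑ^{n-i} ∧ y_1)]
  / [Ω(x̂^i ∧ ẑ^{n-i-1} ∧ y_1) · Ω(x̂^{i-1} ∧ ẑ^{n-i} ∧ t_1)]`. -/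
def edgeFun (K : Type) [Field K] (n : ℕ)
    (Om : AlternatingMap K (Fin n → K) K (Fin n)) (x y z t : ℕ → (Fin n → K))
    (i : ℕ) : K :=
  (Om (rows3 x z t i (n-i-1)) * Om (rows3 x z y (i-1) (n-i)))
    / (Om (rows3 x z y i (n-i-1)) * Om (rows3 x z t (i-1) (n-i)))

/-- The bases `(x_1, …, x_n)` and `(x'_1, …, x'_n)` span the same complete flag:
for every `k = 1, …, n` there is a nonzero scalar `c` with
`x'_1 ∧ … ∧ x'_k = c • (x_1 ∧ … ∧ x_k)` in the exterior algebra. -/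
def SameFlag (K : Type) [Field K] (n : ℕ) (x x' : ℕ → (Fin n → K)) : Prop :=
  ∀ k : ℕ, 1 ≤ k → k ≤ n → ∃ c : K, c ≠ 0 ∧
    ExteriorAlgebra.ιMulti K k (fun i : Fin k => x' (i : ℕ))
      = c • ExteriorAlgebra.ιMulti K k (fun i : Fin k => x (i : ℕ))

/-- Alternating map obtained by freezing all the entries outside the range of `e`. -/
def freezeAlt {K M : Type} [Field K] [AddCommGroup M] [Module K M] {n k : ℕ}
    (Om : AlternatingMap K M K (Fin n)) (e : Fin k → Fin n) (he : Function.Injective e)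
    (w : Fin n → M) : AlternatingMap K M K (Fin k) where
  toFun v := Om (Function.extend e v w)
  map_update_add' := by
    intro inst v i a b
    have key : ∀ a, Function.extend e (Function.update v i a) w
        = Function.update (Function.extend e v w) (e i) a := by
      intro a
      funext j
      by_cases hj : ∃ i', e i' = j
      · obtain ⟨i', rfl⟩ := hj
        rw [he.extend_apply]
        by_cases h : i' = i
        · subst h; simp
        · rw [Function.update_of_ne h, Function.update_of_ne (fun h' => h (he h')),
            he.extend_apply]
      · rw [Function.extend_apply' _ _ _ hj, Function.update_of_ne (fun h' => hj ⟨i, h'.symm⟩),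
          Function.extend_apply' _ _ _ hj]
    simp [key]
  map_update_smul' := by
    intro inst v i c a
    have key : ∀ a, Function.extend e (Function.update v i a) w
        = Function.update (Function.extend e v w) (e i) a := by
      intro a
      funext j
      by_cases hj : ∃ i', e i' = j
      · obtain ⟨i', rfl⟩ := hj
        rw [he.extend_apply]
        by_cases h : i' = i
        · subst h; simp
        · rw [Function.update_of_ne h, Function.update_of_ne (fun h' => h (he h')),
            he.extend_apply]
      · rw [Function.extend_apply' _ _ _ hj, Function.update_of_ne (fun h' => hj ⟨i, h'.symm⟩),
          Function.extend_apply' _ _ _ hj]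
    simp [key]
  map_eq_zero_of_eq' := by
    intro v i j hv hij
    refine Om.map_eq_zero_of_eq _ (i := e i) (j := e j) ?_ (fun h => hij (he h))
    rw [he.extend_apply, he.extend_apply, hv]

theorem alt_of_iMulti {K M : Type} [Field K] [AddCommGroup M] [Module K M] {k : ℕ}
    (f : AlternatingMap K M K (Fin k)) (v v' : Fin k → M) (c : K)
    (h : ExteriorAlgebra.ιMulti K k v' = c • ExteriorAlgebra.ιMulti K k v) :
    f v' = c * f v := by
  classical
  have := congrArg (ExteriorAlgebra.liftAlternating (R := K) (M := M) (N := K)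
    (Function.update (fun _ => 0) k f)) h
  rw [map_smul, ExteriorAlgebra.liftAlternating_apply_ιMulti,
    ExteriorAlgebra.liftAlternating_apply_ιMulti] at this
  simpa using this

theorem block_scale {K M : Type} [Field K] [AddCommGroup M] [Module K M] {n k : ℕ}
    (Om : AlternatingMap K M K (Fin n)) (s : ℕ) (hs : s + k ≤ n) (x x' : ℕ → M) (c : K)
    (h : ExteriorAlgebra.ιMulti K k (fun i : Fin k => x' (i : ℕ))
      = c • ExteriorAlgebra.ιMulti K k (fun i : Fin k => x (i : ℕ)))
    (w w' : Fin n → M)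
    (hw : ∀ j : Fin n, s ≤ (j : ℕ) → (j : ℕ) < s + k → w j = x (j - s) ∧ w' j = x' (j - s))
    (ho : ∀ j : Fin n, ((j : ℕ) < s ∨ s + k ≤ (j : ℕ)) → w' j = w j) :
    Om w' = c * Om w := by
  let e : Fin k → Fin n := fun i => ⟨s + i, by omega⟩
  have he : Function.Injective e := by
    intro a b hab
    have := congrArg Fin.val hab
    simp only [e] at this
    ext; omega
  have h1 := alt_of_iMulti (freezeAlt Om e he w) _ _ c h
  have ext_eq : ∀ (u : ℕ → M) (W : Fin n → M),
      (∀ j : Fin n, s ≤ (j : ℕ) → (j : ℕ) < s + k → W j = u (j - s)) →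
      (∀ j : Fin n, ((j : ℕ) < s ∨ s + k ≤ (j : ℕ)) → W j = w j) →
      Function.extend e (fun i : Fin k => u (i : ℕ)) w = W := by
    intro u W h1 h2
    funext j
    by_cases hj : s ≤ (j : ℕ) ∧ (j : ℕ) < s + k
    · have : j = e ⟨j - s, by omega⟩ := by
        ext; simp only [e]; omega
      rw [h1 j hj.1 hj.2]
      conv_lhs => rw [this]
      rw [he.extend_apply]
    · rw [h2 j (by omega), Function.extend_apply']
      rintro ⟨i, rfl⟩
      apply hj
      simp only [e]
      omega
  have e1 := ext_eq x w (fun j a b => (hw j a b).1) (fun _ _ => rfl)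
  have e2 := ext_eq x' w' (fun j a b => (hw j a b).2) ho
  change Om (Function.extend e _ w) = c * Om (Function.extend e _ w) at h1
  rwa [e1, e2] at h1

theorem SameFlag.exists_scalars {K : Type} [Field K] {n : ℕ} {x x' : ℕ → (Fin n → K)}
    (h : SameFlag K n x x') : ∃ c : ℕ → K, (∀ k, c k ≠ 0) ∧ ∀ k, k ≤ n →
    ExteriorAlgebra.ιMulti K k (fun i : Fin k => x' (i : ℕ))
      = c k • ExteriorAlgebra.ιMulti K k (fun i : Fin k => x (i : ℕ)) := by
  have : ∀ k, ∃ c : K, c ≠ 0 ∧ (k ≤ n →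
    ExteriorAlgebra.ιMulti K k (fun i : Fin k => x' (i : ℕ))
      = c • ExteriorAlgebra.ιMulti K k (fun i : Fin k => x (i : ℕ))) := by
    intro k
    by_cases hk : k ≤ n
    · rcases Nat.eq_zero_or_pos k with rfl | h0
      · refine ⟨1, one_ne_zero, fun _ => ?_⟩
        rw [one_smul]
        congr 1
        funext i
        exact i.elim0
      · obtain ⟨c, hc, e⟩ := h k h0 hk
        exact ⟨c, hc, fun _ => e⟩
    · exact ⟨1, one_ne_zero, fun h => absurd h hk⟩
  choose c hc he using this
  exact ⟨c, hc, he⟩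

theorem rows3_scale {K : Type} [Field K] {n : ℕ}
    (Om : AlternatingMap K (Fin n → K) K (Fin n)) (x x' y y' z z' : ℕ → (Fin n → K))
    (a b d : ℕ) (hab : a + b + d = n) (ca cb cd : K)
    (hx : ExteriorAlgebra.ιMulti K a (fun i : Fin a => x' (i : ℕ))
      = ca • ExteriorAlgebra.ιMulti K a (fun i : Fin a => x (i : ℕ)))
    (hy : ExteriorAlgebra.ιMulti K b (fun i : Fin b => y' (i : ℕ))
      = cb • ExteriorAlgebra.ιMulti K b (fun i : Fin b => y (i : ℕ)))
    (hz : ExteriorAlgebra.ιMulti K d (fun i : Fin d => z' (i : ℕ))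
      = cd • ExteriorAlgebra.ιMulti K d (fun i : Fin d => z (i : ℕ))) :
    Om (rows3 x' y' z' a b) = ca * cb * cd * Om (rows3 x y z a b) := by
  have h1 : Om (rows3 x' y' z' a b) = ca * Om (rows3 x y' z' a b) := by
    refine block_scale Om 0 (by omega) x x' ca hx _ _ ?_ ?_
    · intro j h1 h2
      have : (j : ℕ) < a := by omega
      simp [rows3, this]
    · intro j h1
      have : ¬ (j : ℕ) < a := by omega
      simp [rows3, this]
  have h2 : Om (rows3 x y' z' a b) = cb * Om (rows3 x y z' a b) := by
    refine block_scale Om a (by omega) y y' cb hy _ _ ?_ ?_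
    · intro j h1 h2
      have : ¬ (j : ℕ) < a := by omega
      simp [rows3, this, h2]
    · intro j h1
      rcases h1 with h1 | h1
      · simp [rows3, h1]
      · have : ¬ (j : ℕ) < a + b := by omega
        simp [rows3, this]
  have h3 : Om (rows3 x y z' a b) = cd * Om (rows3 x y z a b) := by
    refine block_scale Om (a + b) (by omega) z z' cd hz _ _ ?_ ?_
    · intro j h1 h2
      have h3 : ¬ (j : ℕ) < a := by omega
      have h4 : ¬ (j : ℕ) < a + b := by omega
      simp [rows3, h3, h4]
    · intro j h1
      have : (j : ℕ) < a + b := by omega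
      simp [rows3, this]
  rw [h1, h2, h3]; ring

/-- If the primed bases span the same complete flags as the unprimed
ones (for each of the four families), then the `(m,l,p)`-triple ratio and the
`(i,n-i)`-edge function computed from the primed bases equal those computed from the
unprimed bases (whenever all the values of `Ω` appearing in the denominators are
nonzero): the triple ratios and the edge functions depend only on the flags. -/
theorem triple_ratio_edge_function_flag_invariance (K : Type) [Field K] [CharZero K]
    (n : ℕ) (hn : 2 ≤ n)
    (Om : AlternatingMap K (Fin n → K) K (Fin n)) (hOm : Om ≠ 0)
    (x x' y y' z z' t t' : ℕ → (Fin n → K))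
    (hx : SameFlag K n x x') (hy : SameFlag K n y y')
    (hz : SameFlag K n z z') (ht : SameFlag K n t t')
    (m l p : ℕ) (hm : 0 < m) (hl : 0 < l) (hp : 0 < p) (hmlp : m + l + p = n)
    (i : ℕ) (hi0 : 0 < i) (hin : i < n)
    (hd1 : Om (rows3 x y z (m+1) (l-1)) ≠ 0)
    (hd2 : Om (rows3 x y z m (l+1)) ≠ 0)
    (hd3 : Om (rows3 x y z (m-1) l) ≠ 0)
    (hd4 : Om (rows3 x z y i (n-i-1)) ≠ 0)
    (hd5 : Om (rows3 x z t (i-1) (n-i)) ≠ 0) :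
    tripleRatio K n Om x' y' z' m l = tripleRatio K n Om x y z m l ∧
    edgeFun K n Om x' y' z' t' i = edgeFun K n Om x y z t i := by
  obtain ⟨cx, nx, ex⟩ := hx.exists_scalars
  obtain ⟨cy, ny, ey⟩ := hy.exists_scalars
  obtain ⟨cz, nz, ez⟩ := hz.exists_scalars
  obtain ⟨ct, nt, et⟩ := ht.exists_scalars
  have R : ∀ a b d, a + b + d = n → Om (rows3 x' y' z' a b)
      = cx a * cy b * cz d * Om (rows3 x y z a b) := fun a b d h =>
    rows3_scale Om x x' y y' z z' a b d h _ _ _ (ex a (by omega)) (ey b (by omega))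
      (ez d (by omega))
  have Ry : ∀ a b d, a + b + d = n → Om (rows3 x' z' y' a b)
      = cx a * cz b * cy d * Om (rows3 x z y a b) := fun a b d h =>
    rows3_scale Om x x' z z' y y' a b d h _ _ _ (ex a (by omega)) (ez b (by omega))
      (ey d (by omega))
  have Rt : ∀ a b d, a + b + d = n → Om (rows3 x' z' t' a b)
      = cx a * cz b * ct d * Om (rows3 x z t a b) := fun a b d h =>
    rows3_scale Om x x' z z' t t' a b d h _ _ _ (ex a (by omega)) (ez b (by omega))
      (et d (by omega))
  constructor
  · unfold tripleRatio
    rw [R (m+1) l (p-1) (by omega), R (m-1) (l+1) p (by omega), R m (l-1) (p+1) (by omega),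
      R (m+1) (l-1) p (by omega), R m (l+1) (p-1) (by omega), R (m-1) l (p+1) (by omega)]
    have := nx (m+1)
    have := nx m
    have := nx (m-1)
    have := ny (l+1)
    have := ny l
    have := ny (l-1)
    have := nz (p+1)
    have := nz p
    have := nz (p-1)
    rw [div_eq_div_iff (by simp [*]) (by simp [*])]
    ring
  · unfold edgeFun
    rw [Rt i (n-i-1) 1 (by omega), Ry (i-1) (n-i) 1 (by omega), Ry i (n-i-1) 1 (by omega),
      Rt (i-1) (n-i) 1 (by omega)]
    rw [div_eq_div_iff (by simp [*]) (by simp [*])]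
    ring
end
end
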